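/- arXiv:2602.20111 — 7 statements merged into one kernel-verified Lean document; each statement's English description precedes it below -/
import Mathlib

section
/- Let 𝒳 be the set of finite sequences over ℕ (the nodes of a rooted tree of infinite depth in which every node has infinitely many children, a node v being an ancestor of x exactly when v is a proper prefix of x). For each x ∈ 𝒳 define f_x : 𝒳 → {+1,−1} by f_x(v) = +1 if v is a prefix of x (equivalently, v lies on the path from the root to x) and f_x(v) = −1 otherwise, and let 𝒞 = {f_x : x ∈ 𝒳}. Then the VC dimension of 𝒞 equals 1: there exists a one-element subset of 𝒳 shattered by 𝒞, and no two-element subset of 𝒳 is shattered by 𝒞. -/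
/-- A finite set `A ⊆ 𝒳` is shattered by a concept class `C ⊆ {+1,−1}^𝒳` if every
`±1`-labeling of `A` is realized by some concept in `C`. -/
def Shatters (C : Set (List ℕ → ℤ)) (A : Finset (List ℕ)) : Prop :=
  ∀ τ : List ℕ → ℤ, (∀ a ∈ A, τ a = 1 ∨ τ a = -1) →
    ∃ h ∈ C, ∀ a ∈ A, h a = τ a

/-- The concept associated to a node `x` of the infinite tree (nodes are finite sequences
over ℕ): `+1` on prefixes of `x` (the path from the root to `x`), `−1` elsewhere. -/
def pathConcept (x : List ℕ) : List ℕ → ℤ :=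
  fun v => if v <+: x then 1 else -1

/-!
The two nodes of a pair `a ≠ b` can both be labeled `1` only if they lie on a common path, and then
one is an ancestor of the other, say `a` of `b`. But every path through `b` passes through `a`, so
the labeling `a ↦ -1`, `b ↦ 1` is not realized.
-/

/-- Shattering of a finite set by a class of `±1`-valued functions on an arbitrary type. For
functions on `List ℕ` it unfolds to `Shatters`. -/
def LabelShatters {X : Type*} (C : Set (X → ℤ)) (A : Finset X) : Prop :=
  ∀ τ : X → ℤ, (∀ a ∈ A, τ a = 1 ∨ τ a = -1) → ∃ f ∈ C, ∀ a ∈ A, f a = τ a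

/-- The `±1`-valued indicator of the lower set `{v | r v x}` generated by `x`. With `r` the prefix
relation on `List ℕ` it unfolds to `pathConcept`. The relation is explicit because the order that
`List ℕ` carries as an instance is the lexicographic one. -/
def principalConcept {X : Type*} (r : X → X → Prop) [DecidableRel r] (x : X) : X → ℤ :=
  fun v => if r v x then 1 else -1

/-- The concept class of all principal lower sets of `r`, encoded as `±1`-valued functions. -/
def principalClass {X : Type*} (r : X → X → Prop) [DecidableRel r] : Set (X → ℤ) :=
  {f | ∃ x : X, f = principalConcept r x}

section LabelShatters

variable {X : Type*} {C : Set (X → ℤ)} {A : Finset X} {a b : X}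

theorem LabelShatters.exists_forall_eq_one (hA : LabelShatters C A) :
    ∃ f ∈ C, ∀ a ∈ A, f a = 1 :=
  hA (fun _ => 1) fun _ _ => Or.inl rfl

theorem LabelShatters.exists_eq_one_and_eq_neg_one (hA : LabelShatters C A) (ha : a ∈ A)
    (hb : b ∈ A) (hab : a ≠ b) : ∃ f ∈ C, f a = 1 ∧ f b = -1 := by
  classical
  obtain ⟨f, hfC, hf⟩ := hA (fun v => if v = a then 1 else -1) fun v _ => ite_eq_or_eq _ _ _
  exact ⟨f, hfC, by rw [hf a ha, if_pos rfl], by rw [hf b hb, if_neg hab.symm]⟩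

theorem labelShatters_singleton {f g : X → ℤ} (hf : f ∈ C) (hg : g ∈ C) (hfa : f a = 1)
    (hga : g a = -1) : LabelShatters C {a} := by
  intro τ hτ
  simp only [Finset.mem_singleton, forall_eq] at hτ ⊢
  rcases hτ with hτa | hτa
  · exact ⟨f, hf, hfa.trans hτa.symm⟩
  · exact ⟨g, hg, hga.trans hτa.symm⟩

end LabelShatters

section PrincipalClass

variable {X : Type*} {r : X → X → Prop} [DecidableRel r] {A : Finset X} {a b v x : X}

theorem principalConcept_eq_one_iff : principalConcept r x v = 1 ↔ r v x := by
  simp [principalConcept]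

theorem principalConcept_eq_neg_one_iff : principalConcept r x v = -1 ↔ ¬ r v x := by
  simp [principalConcept]

theorem labelShatters_principalClass_singleton [Std.Refl r] (hax : ¬ r a x) :
    LabelShatters (principalClass r) {a} :=
  labelShatters_singleton ⟨a, rfl⟩ ⟨x, rfl⟩
    (principalConcept_eq_one_iff.2 (refl_of r a)) (principalConcept_eq_neg_one_iff.2 hax)

theorem LabelShatters.eq_of_rel [IsTrans X r] (hA : LabelShatters (principalClass r) A)
    (ha : a ∈ A) (hb : b ∈ A) (hab : r a b) : a = b := by
  by_contra hne
  obtain ⟨_, ⟨x, rfl⟩, hbx, hax⟩ := hA.exists_eq_one_and_eq_neg_one hb ha (Ne.symm hne)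
  rw [principalConcept_eq_one_iff] at hbx
  rw [principalConcept_eq_neg_one_iff] at hax
  exact hax (trans_of r hab hbx)

theorem LabelShatters.card_le_one_of_isChain [IsTrans X r] (hr : ∀ x, IsChain r {v | r v x})
    (hA : LabelShatters (principalClass r) A) : A.card ≤ 1 := by
  obtain ⟨_, ⟨x, rfl⟩, hx⟩ := hA.exists_forall_eq_one
  have below : ∀ v ∈ A, r v x := fun v hv => principalConcept_eq_one_iff.1 (hx v hv)
  refine Finset.card_le_one.2 fun a ha b hb => by_contra fun hne => ?_
  rcases hr x (below a ha) (below b hb) hne with hab | hba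
  · exact hne (hA.eq_of_rel ha hb hab)
  · exact hne (hA.eq_of_rel hb ha hba).symm

end PrincipalClass

theorem isChain_setOf_prefix {α : Type*} (l : List α) : IsChain (· <+: ·) {v | v <+: l} :=
  fun _ ha _ hb _ => List.prefix_or_prefix_of_prefix ha hb

theorem stmt0_general {X : Type*} (r : X → X → Prop) [DecidableRel r] [IsPreorder X r]
    (hchain : ∀ x, IsChain r {v | r v x}) (hnot : ∃ a x, ¬ r a x) :
    (∃ A : Finset X, A.card = 1 ∧ LabelShatters (principalClass r) A) ∧
    (∀ A : Finset X, A.card = 2 → ¬ LabelShatters (principalClass r) A) := by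
  obtain ⟨a, x, hax⟩ := hnot
  refine ⟨⟨{a}, Finset.card_singleton a, labelShatters_principalClass_singleton hax⟩, ?_⟩
  intro A hcard hA
  have hle : A.card ≤ 1 := hA.card_le_one_of_isChain hchain
  omega

/-- The class `𝒞 = {f_x : x ∈ 𝒳}` of root-to-node paths in the infinite tree has
VC dimension exactly 1: some one-element subset is shattered, and no two-element
subset is shattered. -/
theorem stmt0 :
    (∃ A : Finset (List ℕ), A.card = 1 ∧
        Shatters {f | ∃ x : List ℕ, f = pathConcept x} A) ∧
    (∀ A : Finset (List ℕ), A.card = 2 →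
        ¬ Shatters {f | ∃ x : List ℕ, f = pathConcept x} A) :=
  stmt0_general (· <+: ·) isChain_setOf_prefix ⟨[0], [], by simp⟩
end

section
/- Fix an integer k ≥ 1 and a real c > 0, and let f be a function mapping pairs (U; V), where U is a size-k set of labeled examples and V ⊆ 𝒞, into [0, c], satisfying the Monotonicity property. For such f, the leave-k-out potential of a finite labeled set S is ρ_f(S) := Σ_{U ⊆ S, |U| = k} f(U; 𝒱(S∖U)). Then for every finite set S of labeled examples and every labeled example z ∉ S such that S ∪ {z} is realizable, ρ_f(S ∪ {z}) ≤ ρ_f(S) + c·C(|S|, k−1), where C(n, r) denotes the binomial coefficient. -/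
/-! Basic notions for learning with a concept class `C ⊆ {+1,−1}^𝒳`.  Labeled examples are
pairs in `𝒳 × ℤ` (with labels `±1`). -/

variable {X : Type*}

/-- `h` is consistent with a set of labeled examples. -/
def Consistent (h : X → ℤ) (S : Set (X × ℤ)) : Prop := ∀ p ∈ S, h p.1 = p.2

/-- The version space `𝒱(S)` of hypotheses in `C` consistent with `S`. -/
def VSpace (C : Set (X → ℤ)) (S : Set (X × ℤ)) : Set (X → ℤ) := {h ∈ C | Consistent h S}

/-- The restriction `V_{x→y}`. -/
def Restrict (V : Set (X → ℤ)) (x : X) (y : ℤ) : Set (X → ℤ) := {h ∈ V | h x = y}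

/-- A labeled example `(x,y)` is realizable in `V` if `V_{x→y} ≠ ∅`. -/
def RealizableIn (V : Set (X → ℤ)) (x : X) (y : ℤ) : Prop := (Restrict V x y).Nonempty

/-- `V` is a version space for `C`. -/
def IsVersionSpace (C : Set (X → ℤ)) (V : Set (X → ℤ)) : Prop :=
  ∃ S : Set (X × ℤ), V = VSpace C S

/-- Monotonicity of a score function `f` on size-`k` labeled sets: restricting a version
space consistent with `U` by a labeled example jointly realizable with `U` can only
decrease the score. -/
def MonotoneScore (C : Set (X → ℤ)) (k : ℕ) (f : Finset (X × ℤ) → Set (X → ℤ) → ℝ) : Prop :=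
  ∀ U : Finset (X × ℤ), U.card = k → ∀ V : Set (X → ℤ), IsVersionSpace C V →
    (∃ h ∈ V, Consistent h ↑U) →
    ∀ x : X, ∀ y : ℤ, (∃ h ∈ V, Consistent h (insert (x, y) (↑U : Set (X × ℤ)))) →
      f U (Restrict V x y) ≤ f U V

/-- `m`-robustness of a score function `f`: in every size-`m` set `M` labeled by some
`h ∈ C` there are a size-`k` subset `U ⊆ M` and a witness `p ∈ M ∖ U` such that for every
set `A` of labeled examples labeled by `h` with `A ⊇ M ∖ (U ∪ {p})`, flipping the label of
the witness either drops the score of `U` by at least `1`, or makes `U` unrealizable. -/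
def RobustScore [DecidableEq X] (C : Set (X → ℤ)) (m k : ℕ)
    (f : Finset (X × ℤ) → Set (X → ℤ) → ℝ) : Prop :=
  ∀ h ∈ C, ∀ M : Finset (X × ℤ), M.card = m → Consistent h ↑M →
    ∃ U ⊆ M, U.card = k ∧ ∃ p ∈ M, p ∉ U ∧
      ∀ A : Set (X × ℤ), Consistent h A → ↑(M \ insert p U) ⊆ A →
        (1 ≤ f U (VSpace C A) - f U (Restrict (VSpace C A) p.1 (-p.2)) ∨
          ¬ ∃ h' ∈ Restrict (VSpace C A) p.1 (-p.2), Consistent h' ↑U)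

/-- `f` is an `(m,c,k)`-good function for `(C, 𝒳)`: it maps size-`k` labeled sets and
version spaces into `[0, c]`, is monotone, and is `m`-robust. -/
def IsGood [DecidableEq X] (C : Set (X → ℤ)) (m : ℕ) (c : ℝ) (k : ℕ)
    (f : Finset (X × ℤ) → Set (X → ℤ) → ℝ) : Prop :=
  (∀ U : Finset (X × ℤ), U.card = k → ∀ V : Set (X → ℤ), 0 ≤ f U V ∧ f U V ≤ c) ∧
  MonotoneScore C k f ∧ RobustScore C m k f

/-- The leave-`k`-out potential `ρ_f(S) = Σ_{U ⊆ S, |U| = k} f(U; 𝒱(S ∖ U))`. -/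
def pot [DecidableEq X] (C : Set (X → ℤ)) (k : ℕ)
    (f : Finset (X × ℤ) → Set (X → ℤ) → ℝ) (S : Finset (X × ℤ)) : ℝ :=
  ∑ U ∈ S.powersetCard k, f U (VSpace C ↑(S \ U))

/-! Split the `(k + 1)`-subsets of `S ∪ {z}` according to whether they contain `z`. A subset `U`
with `z ∉ U` is scored against `𝒱((S ∖ U) ∪ {z})`, the restriction of `𝒱(S ∖ U)` by `z`, so by
monotonicity its term is at most the corresponding term of the potential of `S`. Each of the
remaining `C(|S|, k)` terms is at most `c`. -/

theorem sum_powersetCard_succ_insert {α M : Type*} [DecidableEq α] [AddCommMonoid M]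
    {a : α} {s : Finset α} (ha : a ∉ s) (k : ℕ) (g : Finset α → M) :
    ∑ t ∈ (insert a s).powersetCard (k + 1), g t =
      ∑ t ∈ s.powersetCard (k + 1), g t + ∑ t ∈ s.powersetCard k, g (insert a t) := by
  have notMem {n : ℕ} {t : Finset α} (ht : t ∈ s.powersetCard n) : a ∉ t :=
    fun hat => ha ((Finset.mem_powersetCard.1 ht).1 hat)
  have disjoint_image :
      Disjoint (s.powersetCard (k + 1)) ((s.powersetCard k).image (insert a)) := by
    refine Finset.disjoint_left.2 fun t ht ht' => ?_
    obtain ⟨u, -, rfl⟩ := Finset.mem_image.1 ht'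
    exact notMem ht (Finset.mem_insert_self a u)
  have injOn_insert : Set.InjOn (insert a) (s.powersetCard k : Set (Finset α)) :=
    Finset.insert_erase_invOn.2.injOn.mono fun _ ht => notMem ht
  rw [Finset.powersetCard_succ_insert ha, Finset.sum_union disjoint_image,
    Finset.sum_image injOn_insert]

section

variable {C : Set (X → ℤ)} {f : Finset (X × ℤ) → Set (X → ℤ) → ℝ}

theorem Consistent.mono {h : X → ℤ} {A B : Set (X × ℤ)} (hB : Consistent h B) (hAB : A ⊆ B) :
    Consistent h A :=
  fun p hp => hB p (hAB hp)

theorem vSpace_anti {A B : Set (X × ℤ)} (hAB : A ⊆ B) : VSpace C B ⊆ VSpace C A :=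
  fun _ hh => ⟨hh.1, hh.2.mono hAB⟩

theorem vSpace_insert (z : X × ℤ) (A : Set (X × ℤ)) :
    VSpace C (insert z A) = Restrict (VSpace C A) z.1 z.2 := by
  ext h
  simp only [VSpace, Restrict, Consistent, Set.forall_mem_insert, Set.mem_ofPred_eq]
  tauto

theorem MonotoneScore.vSpace_insert_le {k : ℕ} (hf : MonotoneScore C k f)
    {U : Finset (X × ℤ)} (hU : U.card = k) {z : X × ℤ} {A : Set (X × ℤ)}
    (hreal : (VSpace C (insert z (A ∪ U))).Nonempty) :
    f U (VSpace C (insert z A)) ≤ f U (VSpace C A) := by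
  obtain ⟨h, hh⟩ := hreal
  have hA : h ∈ VSpace C A :=
    vSpace_anti (Set.subset_union_left.trans (Set.subset_insert z _)) hh
  have hzU : Consistent h (insert z (U : Set (X × ℤ))) :=
    hh.2.mono (Set.insert_subset_insert Set.subset_union_right)
  rw [vSpace_insert]
  exact hf U hU _ ⟨A, rfl⟩ ⟨h, hA, hzU.mono (Set.subset_insert z _)⟩ z.1 z.2 ⟨h, hA, hzU⟩

variable [DecidableEq X]

theorem pot_succ_insert {S : Finset (X × ℤ)} {z : X × ℤ} (hz : z ∉ S) (k : ℕ) :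
    pot C (k + 1) f (insert z S) =
      ∑ U ∈ S.powersetCard (k + 1), f U (VSpace C (insert z ↑(S \ U))) +
        ∑ U ∈ S.powersetCard k, f (insert z U) (VSpace C ↑(S \ U)) := by
  rw [pot, sum_powersetCard_succ_insert hz]
  congr 1 <;> refine Finset.sum_congr rfl fun U hU => ?_
  · have hzU : z ∉ U := fun h => hz ((Finset.mem_powersetCard.1 hU).1 h)
    rw [Finset.insert_sdiff_of_notMem S hzU, Finset.coe_insert]
  · rw [Finset.insert_sdiff_insert, Finset.sdiff_insert_of_notMem hz]

theorem MonotoneScore.sum_vSpace_insert_le_pot {k : ℕ} (hf : MonotoneScore C k f)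
    {S : Finset (X × ℤ)} {z : X × ℤ} (hreal : (VSpace C ↑(insert z S)).Nonempty) :
    ∑ U ∈ S.powersetCard k, f U (VSpace C (insert z ↑(S \ U))) ≤ pot C k f S := by
  refine Finset.sum_le_sum fun U hU => ?_
  obtain ⟨hUS, hUcard⟩ := Finset.mem_powersetCard.1 hU
  refine hf.vSpace_insert_le hUcard ?_
  rwa [← Finset.coe_union, Finset.sdiff_union_of_subset hUS, ← Finset.coe_insert]

end

theorem stmt3_general {X : Type*} [DecidableEq X] (C : Set (X → ℤ)) (k : ℕ) (c : ℝ)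
    (f : Finset (X × ℤ) → Set (X → ℤ) → ℝ)
    (hle : ∀ U : Finset (X × ℤ), U.card = k + 1 → ∀ V : Set (X → ℤ), f U V ≤ c)
    (hmono : MonotoneScore C (k + 1) f)
    (S : Finset (X × ℤ)) (z : X × ℤ) (hz : z ∉ S)
    (hreal : (VSpace C ↑(insert z S)).Nonempty) :
    pot C (k + 1) f (insert z S) ≤ pot C (k + 1) f S + c * S.card.choose k := by
  have sum_insert_le :
      ∑ U ∈ S.powersetCard k, f (insert z U) (VSpace C ↑(S \ U)) ≤ c * S.card.choose k := by
    rw [mul_comm, ← nsmul_eq_mul, ← Finset.card_powersetCard]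
    refine Finset.sum_le_card_nsmul _ _ c fun U hU => hle _ ?_ _
    obtain ⟨hUS, hUcard⟩ := Finset.mem_powersetCard.1 hU
    rw [Finset.card_insert_of_notMem (fun h => hz (hUS h)), hUcard]
  rw [pot_succ_insert hz]
  exact add_le_add (hmono.sum_vSpace_insert_le_pot hreal) sum_insert_le

/-- One-step potential increase bound: for a bounded monotone score function `f`, adding a
new labeled example `z` to a finite labeled set `S` (with `S ∪ {z}` realizable) increases
the leave-`k`-out potential by at most `c · C(|S|, k−1)`. -/
theorem stmt3 {X : Type*} [DecidableEq X] (C : Set (X → ℤ))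
    (hC : ∀ h ∈ C, ∀ x : X, h x = 1 ∨ h x = -1)
    (k : ℕ) (hk : 1 ≤ k) (c : ℝ) (hc : 0 < c)
    (f : Finset (X × ℤ) → Set (X → ℤ) → ℝ)
    (hrange : ∀ U : Finset (X × ℤ), U.card = k → ∀ V : Set (X → ℤ),
      0 ≤ f U V ∧ f U V ≤ c)
    (hmono : MonotoneScore C k f)
    (S : Finset (X × ℤ)) (z : X × ℤ) (hz : z ∉ S)
    (hreal : (VSpace C ↑(insert z S)).Nonempty) :
    pot C k f (insert z S) ≤ pot C k f S + c * (S.card.choose (k - 1)) := by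
  obtain ⟨k, rfl⟩ := Nat.exists_eq_add_of_le' hk
  exact stmt3_general C k c f (fun U hU V => (hrange U hU V).2) hmono S z hz hreal
end

section
/- Fix an integer k ≥ 1, reals c > 0 and α > 0, and let f be a function mapping pairs (U; V), where U is a size-k set of labeled examples and V ⊆ 𝒞, into [0, c], satisfying the Monotonicity property. For such f, the leave-k-out potential of a finite labeled set S is ρ_f(S) := Σ_{U ⊆ S, |U| = k} f(U; 𝒱(S∖U)). Let ∅ = S_0 ⊂ S_1 ⊂ … ⊂ S_T be a nested sequence of sets of labeled examples with |S_t| = t for each t and S_T realizable. Then the number of indices t ∈ {1,…,T} with ρ_f(S_{t−1}) − ρ_f(S_t) ≥ α is at most (c/α)·C(T, k), which is at most c·T^k/(k!·α). -/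
/-! Basic notions for learning with a concept class `C ⊆ {+1,−1}^𝒳`.  Labeled examples are
pairs in `𝒳 × ℤ` (with labels `±1`). -/

variable {X : Type*}

/-! Complementing the scores, put `Φ(S) = ∑ (c - f(U; 𝒱(S ∖ U))) = c·C(|S|, k) - ρ_f(S)`, the sum
ranging over the size-`k` subsets `U` of `S`.  When a realizable `S` grows, old summands increase by
monotonicity and new ones are nonnegative, so `Φ` increases along the chain.  Since `c·C(|S|, k)`
increases too, a drop of `ρ_f` by `α` is a rise of `Φ` by at least `α`; as
`0 ≤ Φ(S_0) ≤ Φ(S_T) ≤ c·C(|S_T|, k)`, there are at most `(c/α)·C(|S_T|, k)` such drops. -/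

theorem ncard_setOf_pred_eq_card_filter_range (T : ℕ) (P : ℕ → ℕ → Prop)
    [DecidablePred fun t => P t (t + 1)] :
    {t : ℕ | 1 ≤ t ∧ t ≤ T ∧ P (t - 1) t}.ncard =
      ((Finset.range T).filter fun t => P t (t + 1)).card := by
  have himage : {t : ℕ | 1 ≤ t ∧ t ≤ T ∧ P (t - 1) t} =
      Nat.succ '' ↑((Finset.range T).filter fun t => P t (t + 1)) := by
    ext (_ | t) <;> simp
  rw [himage, Set.ncard_image_of_injective _ Nat.succ_injective, Set.ncard_coe_finset]

theorem card_filter_le_sub_nsmul_le {M : Type*} [AddCommGroup M] [PartialOrder M]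
    [IsOrderedAddMonoid M] (g : ℕ → M) (a : M) (T : ℕ)
    [DecidablePred fun t => a ≤ g (t + 1) - g t] (hg : ∀ t < T, g t ≤ g (t + 1)) :
    ((Finset.range T).filter fun t => a ≤ g (t + 1) - g t).card • a ≤ g T - g 0 :=
  calc
    _ ≤ ∑ t ∈ (Finset.range T).filter fun t => a ≤ g (t + 1) - g t, (g (t + 1) - g t) :=
      Finset.card_nsmul_le_sum _ _ _ fun _ ht => (Finset.mem_filter.1 ht).2
    _ ≤ ∑ t ∈ Finset.range T, (g (t + 1) - g t) :=
      Finset.sum_le_sum_of_subset_of_nonneg (Finset.filter_subset _ _) fun t ht _ =>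
        sub_nonneg.2 (hg t (Finset.mem_range.1 ht))
    _ = g T - g 0 := Finset.sum_range_sub g T

theorem vSpace_antitone (C : Set (X → ℤ)) : Antitone (VSpace C) :=
  fun _ _ hAB _ hh => ⟨hh.1, fun p hp => hh.2 p (hAB hp)⟩

theorem mem_vSpace_union {C : Set (X → ℤ)} {A B : Set (X × ℤ)} {h : X → ℤ} :
    h ∈ VSpace C (A ∪ B) ↔ h ∈ VSpace C A ∧ Consistent h B := by
  simp only [VSpace, Consistent, Set.mem_ofPred_eq, Set.mem_union, or_imp, forall_and, and_assoc]

theorem restrict_vSpace (C : Set (X → ℤ)) (A : Set (X × ℤ)) (p : X × ℤ) :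
    Restrict (VSpace C A) p.1 p.2 = VSpace C (insert p A) := by
  ext h
  rw [← Set.union_singleton, mem_vSpace_union]
  simp only [Restrict, Consistent, Set.mem_ofPred_eq, Set.mem_singleton_iff, forall_eq]

namespace MonotoneScore

variable {C : Set (X → ℤ)} {k : ℕ} {f : Finset (X × ℤ) → Set (X → ℤ) → ℝ}
  {U : Finset (X × ℤ)} {A B : Set (X × ℤ)}

theorem apply_vSpace_insert_le (hf : MonotoneScore C k f) (hU : U.card = k) {p : X × ℤ}
    (hreal : (VSpace C (insert p A ∪ U)).Nonempty) :
    f U (VSpace C (insert p A)) ≤ f U (VSpace C A) := by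
  obtain ⟨h, hh⟩ := hreal
  rw [Set.insert_union, ← Set.union_insert, mem_vSpace_union] at hh
  obtain ⟨hA, hpU⟩ := hh
  rw [← restrict_vSpace]
  exact hf U hU _ ⟨A, rfl⟩ ⟨h, hA, fun q hq => hpU q (.inr hq)⟩ p.1 p.2 ⟨h, hA, hpU⟩

theorem apply_vSpace_le_of_subset (hf : MonotoneScore C k f) (hU : U.card = k)
    (hB : B.Finite) (hAB : A ⊆ B) (hreal : (VSpace C (B ∪ U)).Nonempty) :
    f U (VSpace C B) ≤ f U (VSpace C A) := by
  refine hB.induction_to (C := fun D => f U (VSpace C D) ≤ f U (VSpace C A)) A hAB le_rfl ?_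
  intro D hDB hD
  obtain ⟨p, hpB, hpD⟩ := Set.exists_of_ssubset hDB
  have hinsert : insert p D ∪ ↑U ⊆ B ∪ ↑U :=
    Set.union_subset_union_left _ (Set.insert_subset hpB hDB.subset)
  exact ⟨p, ⟨hpB, hpD⟩,
    (hf.apply_vSpace_insert_le hU (hreal.mono (vSpace_antitone C hinsert))).trans hD⟩

end MonotoneScore

/-- The leave-`k`-out potential of the complementary score `c - f`. It measures how far `pot` lies
below its maximal value `c·C(|S|, k)`, and, unlike `pot`, it is monotone in realizable sets. -/
def potDeficit [DecidableEq X] (C : Set (X → ℤ)) (k : ℕ) (c : ℝ)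
    (f : Finset (X × ℤ) → Set (X → ℤ) → ℝ) (S : Finset (X × ℤ)) : ℝ :=
  pot C k (fun U V => c - f U V) S

section Potential

variable [DecidableEq X] {C : Set (X → ℤ)} {k : ℕ} {c : ℝ}
  {f : Finset (X × ℤ) → Set (X → ℤ) → ℝ} {R S : Finset (X × ℤ)}

theorem pot_nonneg (hf : ∀ U : Finset (X × ℤ), U.card = k → ∀ V, 0 ≤ f U V) : 0 ≤ pot C k f S :=
  Finset.sum_nonneg fun U hU => hf U (Finset.mem_powersetCard.1 hU).2 _

theorem potDeficit_eq_sub_pot : potDeficit C k c f S = c * S.card.choose k - pot C k f S := by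
  simp only [potDeficit, pot, Finset.sum_sub_distrib, Finset.sum_const, Finset.card_powersetCard,
    nsmul_eq_mul, mul_comm c]

theorem potDeficit_mono (hle : ∀ U : Finset (X × ℤ), U.card = k → ∀ V, f U V ≤ c)
    (hf : MonotoneScore C k f) (hRS : R ⊆ S) (hreal : (VSpace C (S : Set (X × ℤ))).Nonempty) :
    potDeficit C k c f R ≤ potDeficit C k c f S := by
  have hold : ∀ U ∈ R.powersetCard k,
      c - f U (VSpace C ↑(R \ U)) ≤ c - f U (VSpace C ↑(S \ U)) := by
    intro U hU
    obtain ⟨hUR, hUk⟩ := Finset.mem_powersetCard.1 hU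
    have hunion : (↑(S \ U) ∪ ↑U : Set (X × ℤ)) = S := by
      rw [← Finset.coe_union, Finset.sdiff_union_of_subset (hUR.trans hRS)]
    exact sub_le_sub_left (hf.apply_vSpace_le_of_subset hUk (S \ U).finite_toSet
      (Finset.coe_subset.2 (Finset.sdiff_subset_sdiff hRS le_rfl)) (by rwa [hunion])) c
  have hnew : ∀ U ∈ S.powersetCard k, U ∉ R.powersetCard k →
      0 ≤ c - f U (VSpace C ↑(S \ U)) :=
    fun U hU _ => sub_nonneg.2 (hle U (Finset.mem_powersetCard.1 hU).2 _)
  exact (Finset.sum_le_sum hold).trans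
    (Finset.sum_le_sum_of_subset_of_nonneg (Finset.powersetCard_mono hRS) hnew)

theorem pot_sub_pot_le_potDeficit_sub_potDeficit (hc : 0 ≤ c) (hRS : R ⊆ S) :
    pot C k f R - pot C k f S ≤ potDeficit C k c f S - potDeficit C k c f R := by
  have hchoose : c * (R.card.choose k : ℝ) ≤ c * (S.card.choose k : ℝ) := by
    gcongr
  rw [potDeficit_eq_sub_pot, potDeficit_eq_sub_pot]
  linarith

theorem card_filter_le_pot_sub_pot_mul_le {α : ℝ} (hc : 0 ≤ c) (hα : 0 ≤ α)
    (hrange : ∀ U : Finset (X × ℤ), U.card = k → ∀ V, 0 ≤ f U V ∧ f U V ≤ c)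
    (hf : MonotoneScore C k f) {T : ℕ} {S : ℕ → Finset (X × ℤ)}
    (hS : MonotoneOn S (Set.Iic T)) (hreal : (VSpace C (S T : Set (X × ℤ))).Nonempty)
    [DecidablePred fun t => α ≤ pot C k f (S t) - pot C k f (S (t + 1))] :
    ((Finset.range T).filter fun t => α ≤ pot C k f (S t) - pot C k f (S (t + 1))).card * α ≤
      c * (S T).card.choose k := by
  classical
  set Φ : ℕ → ℝ := fun t => potDeficit C k c f (S t)
  have hstep : ∀ t < T, S t ⊆ S (t + 1) := fun t ht =>
    hS (Set.mem_Iic.2 ht.le) (Set.mem_Iic.2 ht) t.le_succ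
  have hΦ : ∀ t < T, Φ t ≤ Φ (t + 1) := fun t ht =>
    potDeficit_mono (fun U hU V => (hrange U hU V).2) hf (hstep t ht) <| hreal.mono <|
      vSpace_antitone C <| Finset.coe_subset.2 <| hS (Set.mem_Iic.2 ht) Set.self_mem_Iic ht
  have hdrop : ((Finset.range T).filter fun t => α ≤ pot C k f (S t) - pot C k f (S (t + 1))) ⊆
      (Finset.range T).filter fun t => α ≤ Φ (t + 1) - Φ t := by
    intro t ht
    obtain ⟨htT, hαt⟩ := Finset.mem_filter.1 ht
    exact Finset.mem_filter.2 ⟨htT, hαt.trans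
      (pot_sub_pot_le_potDeficit_sub_potDeficit hc (hstep t (Finset.mem_range.1 htT)))⟩
  have hΦ_zero : 0 ≤ Φ 0 := pot_nonneg fun U hU V => sub_nonneg.2 (hrange U hU V).2
  calc
    _ ≤ (((Finset.range T).filter fun t => α ≤ Φ (t + 1) - Φ t).card : ℝ) * α := by gcongr
    _ ≤ Φ T - Φ 0 := by simpa only [nsmul_eq_mul] using card_filter_le_sub_nsmul_le Φ α T hΦ
    _ ≤ Φ T := sub_le_self _ hΦ_zero
    _ = c * (S T).card.choose k - pot C k f (S T) := potDeficit_eq_sub_pot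
    _ ≤ c * (S T).card.choose k := sub_le_self _ (pot_nonneg fun U hU V => (hrange U hU V).1)

end Potential

theorem stmt4_general {X : Type*} [DecidableEq X] (C : Set (X → ℤ)) (k : ℕ) (c α : ℝ)
    (hc : 0 ≤ c) (hα : 0 < α) (f : Finset (X × ℤ) → Set (X → ℤ) → ℝ)
    (hrange : ∀ U : Finset (X × ℤ), U.card = k → ∀ V : Set (X → ℤ), 0 ≤ f U V ∧ f U V ≤ c)
    (hmono : MonotoneScore C k f) (T : ℕ) (S : ℕ → Finset (X × ℤ))
    (hnested : ∀ t < T, S t ⊆ S (t + 1)) (hrealT : (VSpace C ↑(S T)).Nonempty) :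
    (({t : ℕ | 1 ≤ t ∧ t ≤ T ∧ α ≤ pot C k f (S (t - 1)) - pot C k f (S t)}.ncard : ℝ)
        ≤ c / α * ((S T).card.choose k)) ∧
    (c / α * ((S T).card.choose k) : ℝ) ≤
      c * ((S T).card : ℝ) ^ k / (Nat.factorial k * α) := by
  classical
  have hS : MonotoneOn S (Set.Iic T) :=
    monotoneOn_of_le_add_one Set.ordConnected_Iic fun t _ _ ht => hnested t ht
  constructor
  · rw [ncard_setOf_pred_eq_card_filter_range T
        fun s t => α ≤ pot C k f (S s) - pot C k f (S t),
      div_mul_eq_mul_div, le_div_iff₀ hα]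
    exact card_filter_le_pot_sub_pot_mul_le hc hα.le hrange hmono hS hrealT
  · calc
      c / α * ((S T).card.choose k : ℝ) ≤ c / α * (((S T).card : ℝ) ^ k / Nat.factorial k) := by
        gcongr
        exact Nat.choose_le_pow_div k (S T).card
      _ = c * ((S T).card : ℝ) ^ k / (Nat.factorial k * α) := by
        rw [div_mul_div_comm, mul_comm α]

/-- Mistake bound for the leave-`k`-out potential: along a nested sequence
`∅ = S 0 ⊂ S 1 ⊂ … ⊂ S T` of labeled sets with `|S t| = t` and `S T` realizable, the number
of indices `t ∈ {1,…,T}` at which the potential drops by at least `α` is at most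
`(c/α)·C(T,k)`, which in turn is at most `c·T^k/(k!·α)`. -/
theorem stmt4 {X : Type*} [DecidableEq X] (C : Set (X → ℤ))
    (hC : ∀ h ∈ C, ∀ x : X, h x = 1 ∨ h x = -1)
    (k : ℕ) (hk : 1 ≤ k) (c α : ℝ) (hc : 0 < c) (hα : 0 < α)
    (f : Finset (X × ℤ) → Set (X → ℤ) → ℝ)
    (hrange : ∀ U : Finset (X × ℤ), U.card = k → ∀ V : Set (X → ℤ),
      0 ≤ f U V ∧ f U V ≤ c)
    (hmono : MonotoneScore C k f)
    (T : ℕ) (S : ℕ → Finset (X × ℤ))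
    (hS0 : S 0 = ∅)
    (hnested : ∀ t < T, S t ⊆ S (t + 1))
    (hcard : ∀ t ≤ T, (S t).card = t)
    (hrealT : (VSpace C ↑(S T)).Nonempty) :
    (({t : ℕ | 1 ≤ t ∧ t ≤ T ∧ α ≤ pot C k f (S (t - 1)) - pot C k f (S t)}.ncard : ℝ)
        ≤ c / α * (T.choose k)) ∧
    (c / α * (T.choose k) : ℝ) ≤ c * (T : ℝ) ^ k / (Nat.factorial k * α) := by
  simpa only [hcard T le_rfl] using
    stmt4_general C k c α hc.le hα f hrange hmono T S hnested hrealT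
end

section
/- Fix an integer d ≥ 1. Let 𝒳 = ℝ_{≥0}^d and let 𝒞 = {h_v : v ∈ ℝ_{≥0}^d} be the class of axis-aligned rectangles containing the origin, where h_v(x) = +1 if x_i ≤ v_i for every coordinate i ∈ [d] and h_v(x) = −1 otherwise. For x ∈ 𝒳 and i ∈ [d], let δ_i(x) ∈ ℝ_{≥0}^d be the vector whose i-th coordinate is x_i and whose other coordinates are 0. Define f_rect on singletons U = {(x,y)} and version spaces V by f_rect(U; V) := |{i ∈ [d] : (δ_i(x), −1) is realizable in V_{x→y}}|. Then f_rect takes values in [0, d] and is a (2d+1, d, 1)-good function for (𝒞, 𝒳). -/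
/-! Basic notions for learning with a concept class `C ⊆ {+1,−1}^𝒳`.  Labeled examples are
pairs in `𝒳 × ℤ` (with labels `±1`). -/

variable {X : Type*}

open scoped Classical

/-- The domain `𝒳 = ℝ_{≥0}^d`. -/
def NonnegVec (d : ℕ) := {x : Fin d → ℝ // ∀ i, 0 ≤ x i}

/-- The axis-aligned rectangle containing the origin with upper corner `v`:
`h_v(x) = +1` iff `x i ≤ v i` for every coordinate `i`. -/
noncomputable def rectConcept {d : ℕ} (v : Fin d → ℝ) : NonnegVec d → ℤ :=
  fun x => if ∀ i, x.1 i ≤ v i then 1 else -1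

/-- The class of axis-aligned rectangles containing the origin in `ℝ_{≥0}^d`. -/
def rectClass (d : ℕ) : Set (NonnegVec d → ℤ) :=
  {h | ∃ v : Fin d → ℝ, (∀ i, 0 ≤ v i) ∧ h = rectConcept v}

/-- `δ_i(x)`: the vector whose `i`-th coordinate is `x i` and whose other coordinates
are `0`. -/
def deltaVec {d : ℕ} (i : Fin d) (x : NonnegVec d) : NonnegVec d :=
  ⟨fun j => if j = i then x.1 i else 0, fun j => by
    by_cases h : j = i <;> simp [h, x.2 i]⟩

/-- The rectangle score function: on a singleton `U = {(x,y)}` (expressed by requiring the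
condition for every member of `U`) it counts the coordinates `i ∈ [d]` such that
`(δ_i(x), −1)` is realizable in `V_{x→y}`. -/
noncomputable def frect (d : ℕ) : Finset (NonnegVec d × ℤ) → Set (NonnegVec d → ℤ) → ℝ :=
  fun U V =>
    (({i : Fin d | ∀ p ∈ U,
        RealizableIn (Restrict V p.1 p.2) (deltaVec i p.1) (-1)}).ncard : ℝ)

/-! Let `M` consist of `2d + 1` examples labeled by `h_v`; more than `d` of them share a label.

* Among more than `d` positive examples, discard for each coordinate one that maximizes it. Any
  remaining point lies below the discarded ones, so every rectangle containing all the others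
  contains it too, whichever of the others goes into `U`: flipping its label is impossible.
* Among more than `d` negative examples, two, `x` and `z`, lie outside `h_v` because of the same
  coordinate `i`, say with `x i ≤ z i`. The hypothesis `h_v` makes `i` count towards the score of
  `x`. Once `z` is relabeled as positive, all remaining rectangles contain `z`, hence `δ_i(x)`, so
  `i` no longer counts. -/

section Pigeonhole

variable {ι α R : Type*} [Fintype ι] [LinearOrder R] {s : Finset α}

theorem exists_mem_forall_exists_ne_le_of_card_lt (f : α → ι → R)
    (hs : Fintype.card ι < s.card) :
    ∃ p ∈ s, ∀ i, ∃ q ∈ s, q ≠ p ∧ f p i ≤ f q i := by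
  have hne : s.Nonempty := Finset.card_pos.mp (by lia)
  choose g hgs hgmax using fun i ↦ s.exists_max_image (f · i) hne
  have himage : (Finset.univ.image g).card < s.card := Finset.card_image_le.trans_lt hs
  obtain ⟨p, hp, hpg⟩ := Finset.exists_mem_notMem_of_card_lt_card himage
  exact ⟨p, hp, fun i ↦
    ⟨g i, hgs i, fun h ↦ hpg (h ▸ Finset.mem_image_of_mem g (Finset.mem_univ i)), hgmax i p hp⟩⟩

theorem exists_ne_exists_lt_le_of_card_lt {f : α → ι → R} {v : ι → R}
    (hs : Fintype.card ι < s.card) (hv : ∀ a ∈ s, ∃ i, v i < f a i) :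
    ∃ x ∈ s, ∃ z ∈ s, x ≠ z ∧ ∃ i, v i < f x i ∧ f x i ≤ f z i := by
  obtain ⟨a₀, ha₀⟩ : s.Nonempty := Finset.card_pos.mp (by lia)
  have : Nonempty ι := ⟨(hv a₀ ha₀).choose⟩
  choose! c hc using hv
  obtain ⟨a, ha, b, hb, hab, hcab⟩ :=
    Finset.exists_ne_map_eq_of_card_lt_of_maps_to hs (f := c) fun _ _ ↦ Finset.mem_univ _
  rcases le_total (f a (c a)) (f b (c a)) with hle | hle
  · exact ⟨a, ha, b, hb, hab, c a, hc a ha, hle⟩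
  · exact ⟨b, hb, a, ha, hab.symm, c a, hcab ▸ hc b hb, hle⟩

end Pigeonhole

theorem restrict_subset (V : Set (X → ℤ)) (x : X) (y : ℤ) : Restrict V x y ⊆ V :=
  Set.sep_subset _ _

section RectangleScore

variable {d : ℕ}

theorem rectConcept_eq_one_iff {v : Fin d → ℝ} {x : NonnegVec d} :
    rectConcept v x = 1 ↔ ∀ i, x.1 i ≤ v i := by
  unfold rectConcept
  split_ifs with h <;> simp [h]

theorem rectConcept_eq_neg_one_iff {v : Fin d → ℝ} {x : NonnegVec d} :
    rectConcept v x = -1 ↔ ∃ i, v i < x.1 i := by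
  unfold rectConcept
  split_ifs with h <;> simpa using h

theorem rectConcept_eq_neg_one_of_ne_one {v : Fin d → ℝ} {x : NonnegVec d}
    (h : rectConcept v x ≠ 1) : rectConcept v x = -1 := by
  simpa [rectConcept_eq_one_iff, rectConcept_eq_neg_one_iff] using h

theorem rectConcept_deltaVec_eq_neg_one_iff {v : Fin d → ℝ} (hv : ∀ i, 0 ≤ v i)
    {x : NonnegVec d} {i : Fin d} :
    rectConcept v (deltaVec i x) = -1 ↔ v i < x.1 i := by
  rw [rectConcept_eq_neg_one_iff]
  refine ⟨?_, fun h ↦ ⟨i, by simpa [deltaVec] using h⟩⟩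
  rintro ⟨j, hj⟩
  obtain rfl | hji := eq_or_ne j i
  · simpa [deltaVec] using hj
  · exact absurd hj (by simpa [deltaVec, hji] using hv j)

theorem exists_mem_forall_rectConcept_eq_one {α : Type*} {s : Finset α} (f : α → NonnegVec d)
    (hs : d < s.card) :
    ∃ p ∈ s, ∀ w : Fin d → ℝ,
      (∀ q ∈ s, q ≠ p → rectConcept w (f q) = 1) → rectConcept w (f p) = 1 := by
  obtain ⟨p, hp, hdom⟩ :=
    exists_mem_forall_exists_ne_le_of_card_lt (fun a ↦ (f a).1) (by simpa using hs)
  refine ⟨p, hp, fun w hw ↦ rectConcept_eq_one_iff.mpr fun i ↦ ?_⟩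
  obtain ⟨q, hq, hqp, hle⟩ := hdom i
  exact hle.trans (rectConcept_eq_one_iff.mp (hw q hq hqp) i)

/-- The set of coordinates counted by `frect d U V`. -/
def scoreCoords (U : Finset (NonnegVec d × ℤ)) (V : Set (NonnegVec d → ℤ)) : Set (Fin d) :=
  {i | ∀ p ∈ U, RealizableIn (Restrict V p.1 p.2) (deltaVec i p.1) (-1)}

theorem frect_eq_ncard_scoreCoords (U : Finset (NonnegVec d × ℤ)) (V : Set (NonnegVec d → ℤ)) :
    frect d U V = (scoreCoords U V).ncard :=
  rfl

theorem mem_scoreCoords_singleton {x : NonnegVec d} {y : ℤ} {V : Set (NonnegVec d → ℤ)}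
    {i : Fin d} :
    i ∈ scoreCoords {(x, y)} V ↔ ∃ h ∈ V, h x = y ∧ h (deltaVec i x) = -1 := by
  simp only [scoreCoords, RealizableIn, Restrict, Set.Nonempty, Finset.mem_singleton,
    forall_eq, Set.mem_ofPred_eq, and_assoc]

theorem scoreCoords_mono (U : Finset (NonnegVec d × ℤ)) : Monotone (scoreCoords U) :=
  fun _ _ hVW _ hi p hp ↦ (hi p hp).mono fun _ h ↦ ⟨⟨hVW h.1.1, h.1.2⟩, h.2⟩

theorem frect_mono (U : Finset (NonnegVec d × ℤ)) : Monotone (frect d U) := by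
  intro V W hVW
  rw [frect_eq_ncard_scoreCoords, frect_eq_ncard_scoreCoords]
  exact_mod_cast Set.ncard_le_ncard (scoreCoords_mono U hVW)

theorem frect_mem_Icc (U : Finset (NonnegVec d × ℤ)) (V : Set (NonnegVec d → ℤ)) :
    frect d U V ∈ Set.Icc (0 : ℝ) d := by
  have hcard : (scoreCoords U V).ncard ≤ d := by
    simpa using Set.ncard_le_card (scoreCoords U V)
  exact ⟨Nat.cast_nonneg _, Nat.cast_le.mpr hcard⟩

theorem monotoneScore_frect (C : Set (NonnegVec d → ℤ)) (k : ℕ) :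
    MonotoneScore C k (frect d) :=
  fun U _ V _ _ x y _ ↦ frect_mono U (restrict_subset V x y)

theorem notMem_scoreCoords_restrict_one {V : Set (NonnegVec d → ℤ)} (hV : V ⊆ rectClass d)
    {x z : NonnegVec d} {i : Fin d} (hxz : x.1 i ≤ z.1 i) (y : ℤ) :
    i ∉ scoreCoords {(x, y)} (Restrict V z 1) := by
  rw [mem_scoreCoords_singleton]
  rintro ⟨h, ⟨hhV, hz⟩, -, hδ⟩
  obtain ⟨w, hw, rfl⟩ := hV hhV
  have hwx : w i < x.1 i := (rectConcept_deltaVec_eq_neg_one_iff hw).mp hδ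
  have hzw : z.1 i ≤ w i := rectConcept_eq_one_iff.mp hz i
  exact (hwx.trans_le (hxz.trans hzw)).false

theorem one_le_frect_sub_frect_restrict_one {V : Set (NonnegVec d → ℤ)} (hV : V ⊆ rectClass d)
    {x z : NonnegVec d} {y : ℤ} {i : Fin d} (hi : i ∈ scoreCoords {(x, y)} V)
    (hxz : x.1 i ≤ z.1 i) :
    1 ≤ frect d {(x, y)} V - frect d {(x, y)} (Restrict V z 1) := by
  have hssub : scoreCoords {(x, y)} (Restrict V z 1) ⊂ scoreCoords {(x, y)} V :=
    (Set.ssubset_iff_of_subset (scoreCoords_mono _ (restrict_subset V z 1))).mpr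
      ⟨i, hi, notMem_scoreCoords_restrict_one hV hxz y⟩
  have hlt := Set.ncard_lt_ncard hssub
  rw [frect_eq_ncard_scoreCoords, frect_eq_ncard_scoreCoords, le_sub_iff_add_le']
  exact_mod_cast hlt

theorem exists_unrealizable_flip_of_lt_card_positive {M : Finset (NonnegVec d × ℤ)}
    (hM : 1 < M.card) (hpos : d < (M.filter (·.2 = 1)).card) :
    ∃ u ∈ M, ∃ p ∈ M, p ≠ u ∧ ∀ A : Set (NonnegVec d × ℤ), ↑(M \ {p, u}) ⊆ A →
      ¬ ∃ h ∈ Restrict (VSpace (rectClass d) A) p.1 (-p.2), Consistent h {u} := by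
  obtain ⟨p, hp, hforced⟩ := exists_mem_forall_rectConcept_eq_one Prod.fst hpos
  obtain ⟨hpM, hp_label⟩ := Finset.mem_filter.mp hp
  obtain ⟨u, hu, hup⟩ := Finset.exists_mem_ne hM p
  refine ⟨u, hu, p, hpM, hup.symm, ?_⟩
  rintro A hMA ⟨_, ⟨⟨⟨w, -, rfl⟩, hwA⟩, hflip⟩, hwu⟩
  have hp_one : rectConcept w p.1 = 1 := by
    refine hforced w fun q hq hqp ↦ ?_
    obtain ⟨hqM, hq_label⟩ := Finset.mem_filter.mp hq
    rw [← hq_label]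
    obtain rfl | hqu := eq_or_ne q u
    · exact hwu q rfl
    · exact hwA q (hMA (by simp [hqM, hqp, hqu]))
  lia

theorem exists_score_drop_of_lt_card_negative {v : Fin d → ℝ} (hv : ∀ i, 0 ≤ v i)
    {M : Finset (NonnegVec d × ℤ)} (hM : Consistent (rectConcept v) M)
    (hneg : d < (M.filter (¬ ·.2 = 1)).card) :
    ∃ u ∈ M, ∃ p ∈ M, p ≠ u ∧ ∀ A : Set (NonnegVec d × ℤ), Consistent (rectConcept v) A →
      1 ≤ frect d {u} (VSpace (rectClass d) A) -
        frect d {u} (Restrict (VSpace (rectClass d) A) p.1 (-p.2)) := by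
  have hlabel : ∀ q ∈ M.filter (¬ ·.2 = 1), rectConcept v q.1 = -1 := fun q hq ↦ by
    obtain ⟨hqM, hq⟩ := Finset.mem_filter.mp hq
    exact rectConcept_eq_neg_one_of_ne_one (by rwa [hM q hqM])
  obtain ⟨u, hu, p, hp, hup, i, hvu, hle⟩ :=
    exists_ne_exists_lt_le_of_card_lt (f := fun q : NonnegVec d × ℤ ↦ q.1.1) (by simpa using hneg)
      fun q hq ↦ rectConcept_eq_neg_one_iff.mp (hlabel q hq)
  have huM := Finset.mem_of_mem_filter u hu
  have hpM := Finset.mem_of_mem_filter p hp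
  refine ⟨u, huM, p, hpM, hup.symm, fun A hA ↦ ?_⟩
  have hi : i ∈ scoreCoords {u} (VSpace (rectClass d) A) :=
    mem_scoreCoords_singleton.mpr ⟨rectConcept v, ⟨⟨v, hv, rfl⟩, hA⟩, hM u huM,
      (rectConcept_deltaVec_eq_neg_one_iff hv).mpr hvu⟩
  rw [← hM p hpM, hlabel p hp, neg_neg]
  exact one_le_frect_sub_frect_restrict_one (Set.sep_subset _ _) hi hle

theorem robustScore_frect (hd : 1 ≤ d) {m : ℕ} (hm : 2 * d + 1 ≤ m) :
    RobustScore (rectClass d) m 1 (frect d) := by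
  rintro _ ⟨v, hv, rfl⟩ M rfl hM
  have hcard := M.card_filter_add_card_filter_not (·.2 = 1)
  obtain hpos | hneg :
      d < (M.filter (·.2 = 1)).card ∨ d < (M.filter (¬ ·.2 = 1)).card := by lia
  · obtain ⟨u, hu, p, hp, hpu, hflip⟩ := exists_unrealizable_flip_of_lt_card_positive (by lia) hpos
    exact ⟨{u}, by simpa using hu, Finset.card_singleton u, p, hp, by simpa using hpu,
      fun A _ hMA ↦ .inr (by simpa using hflip A hMA)⟩
  · obtain ⟨u, hu, p, hp, hpu, hdrop⟩ := exists_score_drop_of_lt_card_negative hv hM hneg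
    exact ⟨{u}, by simpa using hu, Finset.card_singleton u, p, hp, by simpa using hpu,
      fun A hA _ ↦ .inl (hdrop A hA)⟩

end RectangleScore

/-- `f_rect` takes values in `[0, d]` (on singletons) and is a `(2d+1, d, 1)`-good function
for axis-aligned rectangles containing the origin in `ℝ_{≥0}^d`. -/
theorem stmt6 (d : ℕ) (hd : 1 ≤ d) :
    (∀ (U : Finset (NonnegVec d × ℤ)), U.card = 1 → ∀ V : Set (NonnegVec d → ℤ),
        0 ≤ frect d U V ∧ frect d U V ≤ d) ∧
    IsGood (rectClass d) (2 * d + 1) (d : ℝ) 1 (frect d) :=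
  ⟨fun U _ V ↦ frect_mem_Icc U V, fun U _ V ↦ frect_mem_Icc U V,
    monotoneScore_frect (rectClass d) 1, robustScore_frect hd le_rfl⟩
end

section
/- Let ≺ be a partial order on a set 𝒳 that is a tree order, meaning that for every x ∈ 𝒳 the initial segment I(x) := {x' ∈ 𝒳 : x' ⪯ x} is totally ordered by ⪯. Let 𝒞 be the class of initial segments under ≺: all h : 𝒳 → {+1,−1} such that h^{−1}(+1) is downward closed under ⪯ and totally ordered by ⪯. For a version space V, let P(V) := {x' ∈ 𝒳 : V_{x'→−1} = ∅} be the set of points forced positive by V, and define f_seg on singletons by f_seg({(x,y)}; V) := 1 if P(V) ⊆ I(x) and f_seg({(x,y)}; V) := 0 otherwise. Then f_seg is a (3, 1, 1)-good function for (𝒞, 𝒳). -/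
/-! Basic notions for learning with a concept class `C ⊆ {+1,−1}^𝒳`.  Labeled examples are
pairs in `𝒳 × ℤ` (with labels `±1`). -/

variable {X : Type*}

open scoped Classical

/-- The class of initial segments under a partial order: hypotheses `h : X → {+1,−1}`
whose set of positives is downward closed and totally ordered. -/
def InitSegClass (X : Type*) [PartialOrder X] : Set (X → ℤ) :=
  {h | (∀ x, h x = 1 ∨ h x = -1) ∧
       (∀ x y : X, y ≤ x → h x = 1 → h y = 1) ∧
       (∀ x y : X, h x = 1 → h y = 1 → x ≤ y ∨ y ≤ x)}

/-- `P(V)`: the set of points forced positive by the version space `V`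
(those `x'` with `V_{x'→−1} = ∅`). -/
def forcedPos {X : Type*} (V : Set (X → ℤ)) : Set X :=
  {x' | Restrict V x' (-1) = ∅}

/-- The VC-1 score function for initial segments: on a singleton `U = {(x,y)}` (expressed
by requiring the condition for every member of `U`) it is `1` if `P(V) ⊆ I(x)` and `0`
otherwise, where `I(x) = {x' : x' ⪯ x}`. -/
noncomputable def fseg {X : Type*} [PartialOrder X] :
    Finset (X × ℤ) → Set (X → ℤ) → ℝ :=
  fun U V => if ∀ p ∈ U, forcedPos V ⊆ {x' : X | x' ≤ p.1} then 1 else 0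

/-!
If a version space `V = 𝒱(A)` is nonempty, the points it forces positive are exactly the points
lying below a positive example of `A`, because the indicator of that set is itself in `V`.

Any three examples contain two with the same label. If these are comparable and the label of one is
flipped in the right direction, no initial segment fits both. Two positive examples are always
comparable. Of two incomparable negative points `u` and `x`, one, say `x`, is such that every
positive point below `x` is below `u`, because the positive points form a chain; flip the label of
`x`. Either all positive examples lie below `u`, and forcing `x` positive drops the score of `u`
from `1` to `0`, or some positive example `z` is not below `u`, hence not below `x`, hence
incomparable to `x`, so that nothing in the version space is positive at `x`.
-/

section ForcedPositive

variable {V W : Set (X → ℤ)} {x : X}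

theorem mem_forcedPos : x ∈ forcedPos V ↔ ∀ h ∈ V, h x ≠ -1 :=
  Set.sep_eq_empty_iff_mem_false

theorem forcedPos_anti (hVW : V ⊆ W) : forcedPos W ⊆ forcedPos V := fun _ hx =>
  mem_forcedPos.2 fun h hV => mem_forcedPos.1 hx h (hVW hV)

theorem mem_forcedPos_restrict_one : x ∈ forcedPos (Restrict V x 1) :=
  mem_forcedPos.2 fun h hh => by rw [hh.2]; decide

end ForcedPositive

section Score

variable [PartialOrder X] {U : Finset (X × ℤ)} {V W : Set (X → ℤ)} {u : X} {y : ℤ}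

theorem fseg_nonneg : 0 ≤ fseg U V := by
  unfold fseg; split_ifs <;> norm_num

theorem fseg_le_one : fseg U V ≤ 1 := by
  unfold fseg; split_ifs <;> norm_num

theorem fseg_mono (hVW : V ⊆ W) : fseg U V ≤ fseg U W := by
  unfold fseg
  split_ifs with hV hW
  · exact le_rfl
  · exact absurd (fun p hp => (forcedPos_anti hVW).trans (hV p hp)) hW
  · exact zero_le_one
  · exact le_rfl

theorem monotoneScore_fseg (C : Set (X → ℤ)) (k : ℕ) : MonotoneScore C k fseg :=
  fun _ _ _ _ _ _ _ _ => fseg_mono (Set.sep_subset _ _)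

theorem fseg_singleton_eq_one (h : forcedPos V ⊆ Set.Iic u) : fseg {(u, y)} V = 1 :=
  if_pos fun _ hp => Finset.mem_singleton.1 hp ▸ h

theorem fseg_singleton_eq_zero (h : ¬ forcedPos V ⊆ Set.Iic u) : fseg {(u, y)} V = 0 :=
  if_neg fun hU => h (hU _ (Finset.mem_singleton_self _))

end Score

section SignIndicator

/-- The `±1`-valued indicator function of a set, i.e. the hypothesis whose positive points are the
points of `s`. -/
noncomputable def signIndicator (s : Set X) : X → ℤ := fun x => if x ∈ s then 1 else -1

variable {s : Set X} {x : X}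

theorem signIndicator_eq_one_iff : signIndicator s x = 1 ↔ x ∈ s := by
  unfold signIndicator; split_ifs <;> simp [*]

theorem signIndicator_eq_neg_one_iff : signIndicator s x = -1 ↔ x ∉ s := by
  unfold signIndicator; split_ifs <;> simp [*]

end SignIndicator

section InitialSegments

variable [PartialOrder X] {h : X → ℤ} {A : Set (X × ℤ)} {a b : X}

theorem ne_neg_one_of_le_of_eq_one (hh : h ∈ InitSegClass X) (hab : a ≤ b) (hb : h b = 1) :
    h a ≠ -1 := by
  rw [hh.2.1 b a hab hb]; decide

theorem positives_inter_Iic_subset_or (hh : h ∈ InitSegClass X) (a b : X) :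
    {z | h z = 1} ∩ Set.Iic b ⊆ Set.Iic a ∨ {z | h z = 1} ∩ Set.Iic a ⊆ Set.Iic b := by
  refine or_iff_not_imp_left.2 fun hba w ⟨hw, hwa⟩ => ?_
  obtain ⟨z, ⟨hz, hzb⟩, hza⟩ := Set.not_subset.1 hba
  rcases hh.2.2 z w hz hw with hzw | hwz
  · exact absurd (hzw.trans hwa) hza
  · exact hwz.trans hzb

theorem signIndicator_mem_initSegClass {s : Set X} (hlower : IsLowerSet s)
    (hchain : IsChain (· ≤ ·) s) : signIndicator s ∈ InitSegClass X := by
  simp only [InitSegClass, Set.mem_ofPred_eq, signIndicator_eq_one_iff,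
    signIndicator_eq_neg_one_iff]
  exact ⟨fun x => em (x ∈ s), fun _ _ hyx hx => hlower hyx hx, fun _ _ hx hy => hchain.total hx hy⟩

/-- The points below some positive example of `A`: the smallest initial segment consistent with
`A`, if there is one. -/
def positiveHull (A : Set (X × ℤ)) : LowerSet X := lowerClosure {z | (z, 1) ∈ A}

theorem mem_positiveHull_of_mem {z : X} (hz : (z, 1) ∈ A) : z ∈ positiveHull A :=
  subset_lowerClosure hz

theorem eq_one_of_mem_positiveHull (hh : h ∈ VSpace (InitSegClass X) A) {x : X}
    (hx : x ∈ positiveHull A) : h x = 1 := by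
  obtain ⟨z, hzA, hxz⟩ := mem_lowerClosure.1 hx
  exact hh.1.2.1 z x hxz (hh.2 (z, 1) hzA)

theorem signIndicator_positiveHull_mem_vSpace (hh : h ∈ VSpace (InitSegClass X) A) :
    signIndicator (positiveHull A) ∈ VSpace (InitSegClass X) A := by
  refine ⟨signIndicator_mem_initSegClass (positiveHull A).lower fun a ha b hb _ =>
    hh.1.2.2 a b (eq_one_of_mem_positiveHull hh ha) (eq_one_of_mem_positiveHull hh hb), ?_⟩
  rintro ⟨x, y⟩ hxy
  have hx : h x = y := hh.2 (x, y) hxy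
  rcases hh.1.1 x with hpos | hneg
  · obtain rfl : y = 1 := hx.symm.trans hpos
    exact signIndicator_eq_one_iff.2 (mem_positiveHull_of_mem hxy)
  · obtain rfl : y = -1 := hx.symm.trans hneg
    refine signIndicator_eq_neg_one_iff.2 fun hmem => ?_
    simp [eq_one_of_mem_positiveHull hh hmem] at hneg

theorem forcedPos_vSpace (hne : (VSpace (InitSegClass X) A).Nonempty) :
    forcedPos (VSpace (InitSegClass X) A) = positiveHull A := by
  obtain ⟨h, hh⟩ := hne
  ext x
  rw [mem_forcedPos]
  refine ⟨fun hx => ?_, fun hx g hg => ?_⟩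
  · by_contra hxA
    exact hx _ (signIndicator_positiveHull_mem_vSpace hh) (signIndicator_eq_neg_one_iff.2 hxA)
  · rw [eq_one_of_mem_positiveHull hg hx]; decide

end InitialSegments

section Robustness

/-- `p` is a witness for the robustness of the score `f` at `U`, for every set `A` of examples
labeled by `h`. This is the condition in `RobustScore` without the constraint
`A ⊇ M ∖ (U ∪ {p})`, so that it does not refer to `M`. -/
def IsRobustWitness (C : Set (X → ℤ)) (f : Finset (X × ℤ) → Set (X → ℤ) → ℝ) (h : X → ℤ)
    (U : Finset (X × ℤ)) (p : X × ℤ) : Prop :=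
  ∀ A : Set (X × ℤ), Consistent h A →
    (1 ≤ f U (VSpace C A) - f U (Restrict (VSpace C A) p.1 (-p.2)) ∨
      ¬ ∃ h' ∈ Restrict (VSpace C A) p.1 (-p.2), Consistent h' ↑U)

theorem consistent_singleton {h : X → ℤ} {p : X × ℤ} :
    Consistent h ↑({p} : Finset (X × ℤ)) ↔ h p.1 = p.2 := by
  simp [Consistent]

variable [PartialOrder X] {h : X → ℤ} {f : Finset (X × ℤ) → Set (X → ℤ) → ℝ} {a b : X}

theorem isRobustWitness_pos_of_le (hab : a ≤ b) :
    IsRobustWitness (InitSegClass X) f h {(b, 1)} (a, 1) := by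
  rintro A -
  right
  rintro ⟨g, ⟨hg, hga⟩, hgb⟩
  exact ne_neg_one_of_le_of_eq_one hg.1 hab (consistent_singleton.1 hgb) hga

theorem isRobustWitness_neg_of_le (hab : a ≤ b) :
    IsRobustWitness (InitSegClass X) f h {(a, -1)} (b, -1) := by
  rintro A -
  right
  rintro ⟨g, ⟨hg, hgb⟩, hga⟩
  exact ne_neg_one_of_le_of_eq_one hg.1 hab hgb (consistent_singleton.1 hga)

theorem isRobustWitness_neg_of_not_le {u x : X} (hh : h ∈ InitSegClass X) (hx : h x = -1)
    (hxu : ¬ x ≤ u) (hsub : {z | h z = 1} ∩ Set.Iic x ⊆ Set.Iic u) :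
    IsRobustWitness (InitSegClass X) fseg h {(u, -1)} (x, -1) := by
  intro A hA
  simp only [neg_neg]
  by_cases hbelow : {z | (z, 1) ∈ A} ⊆ Set.Iic u
  · left
    have hbefore : fseg {(u, -1)} (VSpace (InitSegClass X) A) = 1 := by
      apply fseg_singleton_eq_one
      rw [forcedPos_vSpace ⟨h, hh, hA⟩]
      exact lowerClosure_min hbelow (isLowerSet_Iic u)
    have hafter : fseg {(u, -1)} (Restrict (VSpace (InitSegClass X) A) x 1) = 0 :=
      fseg_singleton_eq_zero fun hforced => hxu (hforced mem_forcedPos_restrict_one)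
    rw [hbefore, hafter, sub_zero]
  · right
    rintro ⟨g, ⟨hg, hgx⟩, -⟩
    obtain ⟨z, hzA, hzu⟩ := Set.not_subset.1 hbelow
    have hz : h z = 1 := hA (z, 1) hzA
    rcases hg.1.2.2 z x (hg.2 (z, 1) hzA) hgx with hzx | hxz
    · exact hzu (hsub ⟨hz, hzx⟩)
    · exact ne_neg_one_of_le_of_eq_one hh hxz hz hx

theorem isRobustWitness_neg_or (hh : h ∈ InitSegClass X) (ha : h a = -1) (hb : h b = -1) :
    IsRobustWitness (InitSegClass X) fseg h {(a, -1)} (b, -1) ∨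
      IsRobustWitness (InitSegClass X) fseg h {(b, -1)} (a, -1) := by
  by_cases hab : a ≤ b
  · exact .inl (isRobustWitness_neg_of_le hab)
  by_cases hba : b ≤ a
  · exact .inr (isRobustWitness_neg_of_le hba)
  exact (positives_inter_Iic_subset_or hh a b).imp (isRobustWitness_neg_of_not_le hh hb hba)
    (isRobustWitness_neg_of_not_le hh ha hab)

theorem isRobustWitness_or_of_label_eq (hh : h ∈ InitSegClass X) (hab : h a = h b) :
    IsRobustWitness (InitSegClass X) fseg h {(a, h a)} (b, h b) ∨
      IsRobustWitness (InitSegClass X) fseg h {(b, h b)} (a, h a) := by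
  rcases hh.1 b with hb | hb
  · rw [hab, hb]
    exact (hh.2.2 b a hb (hab.trans hb)).imp isRobustWitness_pos_of_le isRobustWitness_pos_of_le
  · rw [hab, hb]
    exact isRobustWitness_neg_or hh (hab.trans hb) hb

theorem robustScore_fseg [DecidableEq X] {m : ℕ} (hm : 3 ≤ m) :
    RobustScore (InitSegClass X) m 1 fseg := by
  intro h hh M hcard hM
  have hlabels : Set.MapsTo Prod.snd (M : Set (X × ℤ)) ({1, -1} : Finset ℤ) := fun p hp => by
    simpa [← hM p hp] using hh.1 p.1
  have hcard_lt : ({1, -1} : Finset ℤ).card < M.card :=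
    Finset.card_le_two.trans_lt (hcard ▸ hm)
  obtain ⟨⟨a, y⟩, hp, ⟨b, y'⟩, hq, hpq, hlabel⟩ :=
    Finset.exists_ne_map_eq_of_card_lt_of_maps_to hcard_lt hlabels
  obtain rfl : h a = y := hM _ hp
  obtain rfl : h b = y' := hM _ hq
  rcases isRobustWitness_or_of_label_eq hh hlabel with hwit | hwit
  · exact ⟨_, Finset.singleton_subset_iff.2 hp, Finset.card_singleton _, _, hq,
      Finset.notMem_singleton.2 hpq.symm, fun A hA _ => hwit A hA⟩
  · exact ⟨_, Finset.singleton_subset_iff.2 hq, Finset.card_singleton _, _, hp,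
      Finset.notMem_singleton.2 hpq, fun A hA _ => hwit A hA⟩

end Robustness

theorem stmt7_general {X : Type*} [PartialOrder X] [DecidableEq X] {m : ℕ} (hm : 3 ≤ m) :
    IsGood (InitSegClass X) m 1 1 (fseg (X := X)) :=
  ⟨fun _ _ _ => ⟨fseg_nonneg, fseg_le_one⟩, monotoneScore_fseg _ _, robustScore_fseg hm⟩

/-- For a tree order (every initial segment `I(x)` is totally ordered), the score function
`f_seg` is a `(3,1,1)`-good function for the class of initial segments. -/
theorem stmt7 {X : Type*} [PartialOrder X]
    (htree : ∀ x a b : X, a ≤ x → b ≤ x → a ≤ b ∨ b ≤ a) :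
    IsGood (InitSegClass X) 3 1 1 (fseg (X := X)) :=
  stmt7_general le_rfl
end

section
/- Let 𝒞 ⊆ {+1,−1}^𝒳 be a concept class admitting a real-valued representation, and suppose (𝒞, 𝒳) has inference dimension k ≥ 1. Then (𝒞, 𝒳) has certificate dimension k with parameters (m, n) = (k, 2^{k−1} · k!). -/
/-! Basic notions for learning with a concept class `C ⊆ {+1,−1}^𝒳`.  Labeled examples are
pairs in `𝒳 × ℤ` (with labels `±1`). -/

variable {X : Type*}

/-- `(C, 𝒳)` has certificate dimension `k` with parameters `(m, n)`: there is a certificate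
function `σ` mapping a hypothesis and a size-`(k−1)` set of labeled examples into
`{0, …, n−1}` such that for every `h ∈ C` and every set `S` of `m` labeled examples labeled
by `h`, there exist `U ⊆ S` with `|U| = k` and `(x,y) ∈ U` such that every
`h' ∈ 𝒱(S ∖ {(x,y)})` whose certificate value on `U ∖ {(x,y)}` agrees with that of `h`
satisfies `h'(x) = h(x) = y`. -/
def CertDim {X : Type*} [DecidableEq X] (C : Set (X → ℤ)) (k m n : ℕ) : Prop :=
  ∃ σ : (X → ℤ) → Finset (X × ℤ) → ℕ,
    (∀ (h : X → ℤ) (W : Finset (X × ℤ)), W.card = k - 1 → σ h W < n) ∧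
    ∀ h ∈ C, ∀ S : Finset (X × ℤ), S.card = m → Consistent h ↑S →
      ∃ U ⊆ S, U.card = k ∧ ∃ p ∈ U,
        ∀ h' ∈ VSpace C ↑(S.erase p), σ h' (U.erase p) = σ h (U.erase p) →
          h' p.1 = h p.1 ∧ h p.1 = p.2

open scoped Classical

/-- Equality of the comparison-query transcripts `Q_h(S)` and `Q_{h'}(S)` for the
real-valued representation `F`: the sign bits `1[F h z ≥ 0]` and the comparison bits
`1[F h z ≥ F h z']` agree on `S`. -/
def TranscriptEq {X : Type*} (F : (X → ℤ) → X → ℝ) (S : Finset X)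
    (h h' : X → ℤ) : Prop :=
  (∀ z ∈ S, (0 ≤ F h z ↔ 0 ≤ F h' z)) ∧
  (∀ z ∈ S, ∀ z' ∈ S, (F h z' ≤ F h z ↔ F h' z' ≤ F h' z))

/-- `S ∖ {x}` infers `x` under `h`: every `h' ∈ C` with the same comparison-query
transcript as `h` on `S ∖ {x}` agrees with `h` at `x`. -/
def Infers {X : Type*} [DecidableEq X] (C : Set (X → ℤ)) (F : (X → ℤ) → X → ℝ)
    (S : Finset X) (x : X) (h : X → ℤ) : Prop :=
  ∀ h' ∈ C, TranscriptEq F (S.erase x) h h' → h' x = h x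

/-- The inference-dimension property at `k`: every size-`k` subset `S` of the domain,
for every `h ∈ C`, contains a point inferred by the rest of `S` under `h`. -/
def InfDimProp {X : Type*} [DecidableEq X] (C : Set (X → ℤ)) (F : (X → ℤ) → X → ℝ)
    (k : ℕ) : Prop :=
  ∀ S : Finset X, S.card = k → ∀ h ∈ C, ∃ x ∈ S, Infers C F S x h

/-!
A sorted finite family is determined, as far as comparisons go, by the set of places where a value
repeats an earlier one. So a family indexed by an `N`-element type has at most `2 ^ N * N!`
comparison patterns: one sorting bijection and one set of repeats. The certificate of `h` on `W` is
the index of the comparison pattern of the values of `F h` on `W`. Two hypotheses consistent with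
`W` have the same sign bits there, so if they also share the certificate they have the same
transcript, and inference dimension applies to the underlying points.
-/

open Set
open scoped Nat

section ComparisonPatterns

variable {ι α : Type*}

/-- The places at which a sequence takes a value that it has already taken at an earlier place. For
a monotone sequence this set records all ties. -/
def repeatIndices [LT ι] (f : ι → α) : Set ι := {i | ∃ j < i, f j = f i}

theorem le_iff_Ioc_subset_repeatIndices [LinearOrder ι] [WellFoundedLT ι] [PartialOrder α]
    {f : ι → α} (hf : Monotone f) (s t : ι) : f t ≤ f s ↔ Ioc s t ⊆ repeatIndices f := by
  constructor
  · rintro hts i ⟨hsi, hit⟩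
    exact ⟨s, hsi, le_antisymm (hf hsi.le) ((hf hit).trans hts)⟩
  · intro hrepeat
    induction t using WellFoundedLT.induction with
    | ind t ih =>
      rcases le_or_gt t s with hts | hst
      · exact hf hts
      · obtain ⟨j, hjt, hj⟩ := hrepeat ⟨hst, le_rfl⟩
        exact hj ▸ ih j hjt ((Ioc_subset_Ioc_right hjt.le).trans hrepeat)

/-- The index of the relation `g a ≤ g b` in a fixed enumeration of all relations of this form. -/
noncomputable def comparisonCode [Finite ι] [LE α] (g : ι → α) : ℕ :=
  Finite.equivFin (range fun g : ι → α ↦ g ⁻¹'o (· ≤ ·)) (rangeFactorization _ g)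

theorem le_iff_le_of_comparisonCode_eq [Finite ι] [LE α] {g g' : ι → α}
    (hcode : comparisonCode g = comparisonCode g') (a b : ι) : g a ≤ g b ↔ g' a ≤ g' b := by
  have pattern_eq : g ⁻¹'o (· ≤ ·) = g' ⁻¹'o (· ≤ ·) :=
    congrArg Subtype.val ((Finite.equivFin _).injective (Fin.ext hcode))
  exact iff_of_eq (congrFun₂ pattern_eq a b)

variable [Fintype ι] [LinearOrder α]

theorem exists_equiv_fin_monotone_comp (g : ι → α) :
    ∃ e : Fin (Fintype.card ι) ≃ ι, Monotone (g ∘ e) :=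
  let e := (Fintype.equivFin ι).symm
  ⟨(Tuple.sort (g ∘ e)).trans e, Tuple.monotone_sort (g ∘ e)⟩

theorem card_range_preimage_le_le :
    Nat.card (range fun g : ι → α ↦ g ⁻¹'o (· ≤ ·)) ≤
      2 ^ Fintype.card ι * (Fintype.card ι)! := by
  let decode (c : Set (Fin (Fintype.card ι)) × (Fin (Fintype.card ι) ≃ ι)) : ι → ι → Prop :=
    fun a b ↦ Ioc (c.2.symm b) (c.2.symm a) ⊆ c.1
  have range_subset : (range fun g : ι → α ↦ g ⁻¹'o (· ≤ ·)) ⊆ range decode := by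
    rintro _ ⟨g, rfl⟩
    obtain ⟨e, he⟩ := exists_equiv_fin_monotone_comp g
    refine ⟨(repeatIndices (g ∘ e), e), ?_⟩
    ext a b
    simpa [decode] using (le_iff_Ioc_subset_repeatIndices he (e.symm b) (e.symm a)).symm
  calc
    _ ≤ Nat.card (range decode) := Nat.card_mono (toFinite _) range_subset
    _ ≤ Nat.card (Set (Fin (Fintype.card ι)) × (Fin (Fintype.card ι) ≃ ι)) :=
      Finite.card_range_le decode
    _ = 2 ^ Fintype.card ι * (Fintype.card ι)! := by
      simp [Fintype.card_equiv (Fintype.equivFin ι).symm]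

theorem comparisonCode_lt (g : ι → α) :
    comparisonCode g < 2 ^ Fintype.card ι * (Fintype.card ι)! :=
  (Fin.is_lt _).trans_le card_range_preimage_le_le

end ComparisonPatterns

theorem Consistent.mono_s10 {h : X → ℤ} {S T : Set (X × ℤ)} (hT : Consistent h T) (hST : S ⊆ T) :
    Consistent h S :=
  fun p hp ↦ hT p (hST hp)

theorem Consistent.injOn_fst {h : X → ℤ} {S : Set (X × ℤ)} (hS : Consistent h S) :
    InjOn Prod.fst S :=
  fun p hp q hq hpq ↦ Prod.ext hpq (by rw [← hS p hp, ← hS q hq, hpq])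

theorem CertDim.mono_right [DecidableEq X] {C : Set (X → ℤ)} {k m n n' : ℕ} (hn : n ≤ n') :
    CertDim C k m n → CertDim C k m n' :=
  fun ⟨σ, hlt, hcert⟩ ↦ ⟨σ, fun h W hW ↦ (hlt h W hW).trans_le hn, hcert⟩

/-- The certificate function: the code of the comparisons between the values of `F h` at the
points of `W`, whose labels are ignored. -/
noncomputable def comparisonCert (F : (X → ℤ) → X → ℝ) (h : X → ℤ) (W : Finset (X × ℤ)) : ℕ :=
  comparisonCode fun p : W ↦ F h p.1.1

variable {F : (X → ℤ) → X → ℝ}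

theorem comparisonCert_lt (h : X → ℤ) (W : Finset (X × ℤ)) :
    comparisonCert F h W < 2 ^ W.card * (W.card)! :=
  (comparisonCode_lt _).trans_eq (by rw [Fintype.card_coe])

theorem TranscriptEq.mono_s10 {S T : Finset X} {h h' : X → ℤ} (hT : TranscriptEq F T h h')
    (hST : S ⊆ T) : TranscriptEq F S h h' :=
  ⟨fun z hz ↦ hT.1 z (hST hz), fun z hz z' hz' ↦ hT.2 z (hST hz) z' (hST hz')⟩

theorem transcriptEq_of_comparisonCert_eq [DecidableEq X] {h h' : X → ℤ} {W : Finset (X × ℤ)}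
    (hsign : ∀ x, h x = if 0 ≤ F h x then 1 else -1)
    (hsign' : ∀ x, h' x = if 0 ≤ F h' x then 1 else -1)
    (hW : Consistent h ↑W) (hW' : Consistent h' ↑W)
    (hcert : comparisonCert F h W = comparisonCert F h' W) :
    TranscriptEq F (W.image Prod.fst) h h' := by
  constructor
  · simp only [Finset.forall_mem_image]
    intro p hp
    have label_eq : h p.1 = h' p.1 := (hW p hp).trans (hW' p hp).symm
    rw [hsign, hsign'] at label_eq
    split_ifs at label_eq with hnonneg hnonneg' hnonneg'
    · exact iff_of_true hnonneg hnonneg'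
    · exact iff_of_false hnonneg hnonneg'
  · simp only [Finset.forall_mem_image]
    intro p hp q hq
    exact le_iff_le_of_comparisonCode_eq hcert ⟨q, hq⟩ ⟨p, hp⟩

theorem InfDimProp.exists_mem_eq_of_comparisonCert_eq [DecidableEq X] {C : Set (X → ℤ)}
    (hrep : ∀ h ∈ C, ∀ x : X, h x = if 0 ≤ F h x then 1 else -1) {k : ℕ}
    (hinf : InfDimProp C F k) {h : X → ℤ} (hh : h ∈ C) {U : Finset (X × ℤ)} (hU : U.card = k)
    (hcons : Consistent h ↑U) :
    ∃ p ∈ U, ∀ h' ∈ VSpace C ↑(U.erase p),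
      comparisonCert F h' (U.erase p) = comparisonCert F h (U.erase p) → h' p.1 = h p.1 := by
  have card_points : (U.image Prod.fst).card = k :=
    (Finset.card_image_of_injOn hcons.injOn_fst).trans hU
  obtain ⟨_, hx, hinfers⟩ := hinf _ card_points h hh
  obtain ⟨p, hp, rfl⟩ := Finset.mem_image.1 hx
  refine ⟨p, hp, fun h' ⟨hh', hcons'⟩ hcert ↦ hinfers h' hh' ?_⟩
  have transcript_eq : TranscriptEq F ((U.erase p).image Prod.fst) h h' :=
    transcriptEq_of_comparisonCert_eq (hrep h hh) (hrep h' hh')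
      (hcons.mono_s10 (Finset.coe_subset.2 (U.erase_subset p))) hcons' hcert.symm
  exact transcript_eq.mono_s10 (Finset.erase_image_subset_image_erase _ _ _)

theorem stmt10_general [DecidableEq X] (C : Set (X → ℤ)) (F : (X → ℤ) → X → ℝ)
    (hrep : ∀ h ∈ C, ∀ x : X, h x = if 0 ≤ F h x then 1 else -1) {k m : ℕ} (hkm : k + 1 ≤ m)
    (hinf : InfDimProp C F (k + 1)) : CertDim C (k + 1) m (2 ^ k * k !) := by
  refine ⟨comparisonCert F, fun h W hW ↦ ?_, fun h hh S hS hcons ↦ ?_⟩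
  · have card_W : W.card = k := hW
    exact card_W ▸ comparisonCert_lt h W
  · obtain ⟨U, hUS, hU⟩ := Finset.exists_subset_card_eq (hS ▸ hkm)
    obtain ⟨p, hp, hdetermines⟩ := hinf.exists_mem_eq_of_comparisonCert_eq hrep hh hU
      (hcons.mono_s10 (Finset.coe_subset.2 hUS))
    refine ⟨U, hUS, hU, p, hp, fun h' ⟨hh', hcons'⟩ hcert ↦ ⟨?_, hcons p (hUS hp)⟩⟩
    exact hdetermines h'
      ⟨hh', hcons'.mono_s10 (Finset.coe_subset.2 (Finset.erase_subset_erase p hUS))⟩ hcert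

/-- If `C` admits a real-valued representation `F` (so `h x = sign (F h x)` with
`sign t = +1` iff `t ≥ 0`) and `(C, 𝒳)` has inference dimension `k ≥ 1` (the smallest
integer with the inference property), then `(C, 𝒳)` has certificate dimension `k` with
parameters `(m, n) = (k, 2^{k−1}·k!)`. -/
theorem stmt10 {X : Type*} [DecidableEq X] (C : Set (X → ℤ))
    (F : (X → ℤ) → X → ℝ)
    (hrep : ∀ h ∈ C, ∀ x : X, h x = if 0 ≤ F h x then 1 else -1)
    (k : ℕ) (hk : 1 ≤ k)
    (hinf : InfDimProp C F k) (hmin : ∀ j < k, ¬ InfDimProp C F j) :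
    CertDim C k k (2 ^ (k - 1) * Nat.factorial k) := by
  obtain ⟨k, rfl⟩ := Nat.exists_eq_add_of_le' hk
  exact (stmt10_general C F hrep le_rfl hinf).mono_right
    (Nat.mul_le_mul_left _ (Nat.factorial_le k.le_succ))
end

section
/- Fix distinct points s₊, s₋ ∈ ℝ². Let sign(t) = +1 if t ≥ 0 and −1 otherwise, and let 𝒞 = {x ↦ sign(wᵀx − b) : w ∈ ℝ², b ∈ ℝ, wᵀs₊ ≥ b > wᵀs₋} be the class of two-dimensional {(s₊,+1),(s₋,−1)}-halfspaces over 𝒳 = ℝ². Then (𝒞, ℝ²) has certificate dimension 3 with parameters (m, n) = (7, 3). -/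
/-! Basic notions for learning with a concept class `C ⊆ {+1,−1}^𝒳`.  Labeled examples are
pairs in `𝒳 × ℤ` (with labels `±1`). -/

variable {X : Type*}

open scoped Classical
open Matrix

/-- `sign t = +1` if `t ≥ 0` and `−1` otherwise. -/
noncomputable def signR (t : ℝ) : ℤ := if 0 ≤ t then 1 else -1

/-- The class of two-dimensional `{(s₊,+1),(s₋,−1)}`-halfspaces:
all `x ↦ sign(wᵀx − b)` with `w ∈ ℝ²`, `b ∈ ℝ`, and `wᵀs₊ ≥ b > wᵀs₋`. -/
def Halfspaces (sp sm : Fin 2 → ℝ) : Set ((Fin 2 → ℝ) → ℤ) :=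
  {h | ∃ (w : Fin 2 → ℝ) (b : ℝ), b ≤ w ⬝ᵥ sp ∧ w ⬝ᵥ sm < b ∧
        h = fun x => signR (w ⬝ᵥ x - b)}

/-!
Seen from the oppositely labelled point `s`, let `t` minimise the functional `φ` of `h` over the
anchor `a` and at least four examples of one label.  Two of three further examples `p`, `q` lie on
the same side of the line through `s` and `t`, so that one of `p - t`, `q - t` is in the cone
spanned by `t - s` and the other.  If it is `p - t`, then every half-plane `ψ ≥ c` that omits `s`
and contains `t`, with `ψ t ≤ ψ q`, contains `p`.  The certificate therefore only has to say which
of the three points `a`, `q`, `r` is the minimiser `t`, where `r` is `t` if `t ≠ a`.  Among seven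
examples some label occurs four times.
-/

section Argmin

variable {α β : Type*}

/-- The value of `f` paired with a rank of the point itself, so that minimisers of a function
with ties become unique. -/
noncomputable def tieBreak (f : α → β) (x : α) : β ×ₗ Cardinal :=
  toLex (f x, embeddingToCardinal x)

lemma tieBreak_injective (f : α → β) : Function.Injective (tieBreak f) := fun _ _ h =>
  embeddingToCardinal.injective (congrArg (fun z => (ofLex z).2) h)

variable [LinearOrder β]

lemma le_of_tieBreak_le {f : α → β} {x y : α} (h : tieBreak f x ≤ tieBreak f y) : f x ≤ f y :=
  Prod.Lex.monotone_fst _ _ h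

variable [DecidableEq α]

/-- The minimiser of `f` over `insert a s`, ties being broken by a fixed order on `α`.  The
distinguished element `a` keeps the set nonempty. -/
noncomputable def argminInsert (f : α → β) (a : α) (s : Finset α) : α :=
  ((insert a s).exists_min_image (tieBreak f) (s.insert_nonempty a)).choose

lemma argminInsert_mem (f : α → β) (a : α) (s : Finset α) : argminInsert f a s ∈ insert a s :=
  ((insert a s).exists_min_image (tieBreak f) (s.insert_nonempty a)).choose_spec.1

lemma tieBreak_argminInsert_le (f : α → β) {a x : α} {s : Finset α} (hx : x ∈ insert a s) :
    tieBreak f (argminInsert f a s) ≤ tieBreak f x :=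
  ((insert a s).exists_min_image (tieBreak f) (s.insert_nonempty a)).choose_spec.2 x hx

lemma apply_argminInsert_le (f : α → β) {a x : α} {s : Finset α} (hx : x ∈ insert a s) :
    f (argminInsert f a s) ≤ f x :=
  le_of_tieBreak_le (tieBreak_argminInsert_le f hx)

lemma argminInsert_eq_of_subset {f : α → β} {a : α} {s t : Finset α} (hst : s ⊆ t)
    (h : argminInsert f a t ∈ insert a s) : argminInsert f a s = argminInsert f a t :=
  tieBreak_injective f <| le_antisymm (tieBreak_argminInsert_le f h) <|
    tieBreak_argminInsert_le f (Finset.insert_subset_insert a hst (argminInsert_mem f a s))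

/-- The position of `argminInsert f a s` in an enumeration of `insert a s`: the certificate value
that lets one recover the minimiser from the set. -/
noncomputable def argminIndex (f : α → β) (a : α) (s : Finset α) : ℕ :=
  (insert a s).toList.idxOf (argminInsert f a s)

lemma argminIndex_le_card (f : α → β) (a : α) (s : Finset α) : argminIndex f a s ≤ s.card := by
  have hlt : argminIndex f a s < (insert a s).card := by
    rw [← Finset.length_toList]
    exact List.idxOf_lt_length_of_mem (Finset.mem_toList.2 (argminInsert_mem f a s))
  exact Nat.le_of_lt_succ (hlt.trans_le (Finset.card_insert_le a s))

lemma argminInsert_eq_of_argminIndex_eq {f g : α → β} {a : α} {s : Finset α}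
    (h : argminIndex f a s = argminIndex g a s) : argminInsert f a s = argminInsert g a s :=
  (List.idxOf_inj (Finset.mem_toList.2 (argminInsert_mem f a s))).1 h

end Argmin

lemma exists_dual_ker_eq_span_singleton {K V : Type*} [Field K] [AddCommGroup V] [Module K V]
    (hV : Module.finrank K V = 2) {d : V} (hd : d ≠ 0) :
    ∃ f : Module.Dual K V, f.ker = K ∙ d := by
  have : FiniteDimensional K V := Module.finite_of_finrank_eq_succ hV
  have hquot : Module.finrank K (V ⧸ (K ∙ d)) = 1 := by
    have := (K ∙ d).finrank_quotient_add_finrank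
    rw [finrank_span_singleton hd] at this
    omega
  obtain ⟨e⟩ := Module.nonempty_linearEquiv_of_finrank_eq_one hquot
  exact ⟨e.symm.toLinearMap ∘ₗ (K ∙ d).mkQ, by rw [LinearEquiv.ker_comp, Submodule.ker_mkQ]⟩

lemma exists_third_mem {α : Type*} [DecidableEq α] {T : Finset α} {a p q t : α}
    (hT : 2 < T.card) (ht : t ∈ insert a T) (hpt : p ≠ t) (hqt : q ≠ t) :
    ∃ r ∈ T, p ≠ r ∧ q ≠ r ∧ t ∈ insert a ({q, r} : Finset α) := by
  rcases Finset.mem_insert.1 ht with rfl | htT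
  · obtain ⟨r, hrT, hr⟩ := Finset.exists_mem_notMem_of_card_lt_card
      ((Finset.card_le_two (a := p) (b := q)).trans_lt hT)
    rw [Finset.mem_insert, Finset.mem_singleton, not_or] at hr
    exact ⟨r, hrT, Ne.symm hr.1, Ne.symm hr.2, Finset.mem_insert_self _ _⟩
  · exact ⟨t, htT, hpt, hqt, by simp⟩

section Cone

variable {𝕜 E : Type*} [Field 𝕜] [LinearOrder 𝕜] [IsStrictOrderedRing 𝕜] [AddCommGroup E]
  [Module 𝕜 E]

lemma mem_hull_pair {d v u : E} :
    u ∈ PointedCone.hull 𝕜 {d, v} ↔ ∃ b c : 𝕜, 0 ≤ b ∧ 0 ≤ c ∧ b • d + c • v = u := by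
  rw [PointedCone.hull, Submodule.mem_span_pair]
  exact ⟨fun ⟨b, c, h⟩ => ⟨b, c, b.2, c.2, h⟩, fun ⟨b, c, hb, hc, h⟩ => ⟨⟨b, hb⟩, ⟨c, hc⟩, h⟩⟩

lemma apply_nonneg_of_mem_hull_pair {φ : Module.Dual 𝕜 E} {d v u : E}
    (hu : u ∈ PointedCone.hull 𝕜 {d, v}) (hd : 0 ≤ φ d) (hv : 0 ≤ φ v) : 0 ≤ φ u := by
  obtain ⟨b, c, hb, hc, rfl⟩ := mem_hull_pair.1 hu
  rw [map_add, map_smul, map_smul]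
  exact add_nonneg (mul_nonneg hb hd) (mul_nonneg hc hv)

lemma mem_hull_pair_of_mem_span_singleton {φ : Module.Dual 𝕜 E} {d u : E} (v : E) (hd : 0 < φ d)
    (hu : 0 ≤ φ u) (hspan : u ∈ 𝕜 ∙ d) : u ∈ PointedCone.hull 𝕜 {d, v} := by
  obtain ⟨c, rfl⟩ := Submodule.mem_span_singleton.1 hspan
  rw [map_smul, smul_eq_mul] at hu
  exact mem_hull_pair.2 ⟨c, 0, nonneg_of_mul_nonneg_left hu hd, le_rfl, by simp⟩

lemma mem_hull_pair_or_of_ker_eq_span {f φ : Module.Dual 𝕜 E} {d u v : E}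
    (hf : f.ker = 𝕜 ∙ d) (hd : 0 < φ d) (hu : 0 ≤ φ u) (hv : 0 ≤ φ v)
    (hside : 0 ≤ f u * f v) :
    u ∈ PointedCone.hull 𝕜 {d, v} ∨ v ∈ PointedCone.hull 𝕜 {d, u} := by
  by_cases hfu : f u = 0
  · exact .inl (mem_hull_pair_of_mem_span_singleton v hd hu (hf ▸ hfu))
  by_cases hfv : f v = 0
  · exact .inr (mem_hull_pair_of_mem_span_singleton u hd hv (hf ▸ hfv))
  obtain ⟨r, hr⟩ : ∃ r, r = f u / f v := ⟨_, rfl⟩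
  have hr0 : 0 < r := hr ▸ div_pos_iff.2 (mul_pos_iff.1 (hside.lt_of_ne' (mul_ne_zero hfu hfv)))
  have hker : u - r • v ∈ f.ker := by simp [hr, hfv]
  obtain ⟨c, hc⟩ := Submodule.mem_span_singleton.1 (hf ▸ hker)
  have hu_eq : c • d + r • v = u := by rw [hc, sub_add_cancel]
  rcases le_total 0 c with hc0 | hc0
  · exact .inl (mem_hull_pair.2 ⟨c, r, hc0, hr0.le, hu_eq⟩)
  · have hv_eq : (r⁻¹ * -c) • d + r⁻¹ • u = v := by
      rw [mul_smul, ← smul_add, ← hu_eq, neg_smul, neg_add_cancel_left, inv_smul_smul₀ hr0.ne']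
    exact .inr (mem_hull_pair.2
      ⟨r⁻¹ * -c, r⁻¹, mul_nonneg (inv_nonneg.2 hr0.le) (neg_nonneg.2 hc0), inv_nonneg.2 hr0.le,
        hv_eq⟩)

lemma exists_ne_mul_nonneg {ι : Type*} (g : ι → 𝕜) {R : Finset ι} (hR : 3 ≤ R.card) :
    ∃ p ∈ R, ∃ q ∈ R, p ≠ q ∧ 0 ≤ g p * g q := by
  have hcard : (Finset.univ : Finset Prop).card < R.card := by
    rw [Finset.card_univ, Fintype.card_prop]
    exact hR
  obtain ⟨p, hp, q, hq, hpq, hsign⟩ := Finset.exists_ne_map_eq_of_card_lt_of_maps_to hcard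
    (f := fun i => 0 ≤ g i) fun _ _ => Finset.mem_coe.2 (Finset.mem_univ _)
  refine ⟨p, hp, q, hq, hpq, ?_⟩
  by_cases hgp : 0 ≤ g p
  · exact mul_nonneg hgp (hsign.mp hgp)
  · exact mul_nonneg_of_nonpos_of_nonpos (le_of_not_ge hgp)
      (le_of_not_ge fun hgq => hgp (hsign.mpr hgq))

lemma exists_ne_sub_mem_hull_pair (hE : Module.finrank 𝕜 E = 2) {φ : Module.Dual 𝕜 E} {d t : E}
    {R : Finset E} (hR : 3 ≤ R.card) (hd : 0 < φ d) (hmin : ∀ x ∈ R, φ t ≤ φ x) :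
    ∃ p ∈ R, ∃ q ∈ R, p ≠ q ∧ p - t ∈ PointedCone.hull 𝕜 {d, q - t} := by
  have hd0 : d ≠ 0 := by
    rintro rfl
    simp at hd
  have hφ : ∀ x ∈ R, 0 ≤ φ (x - t) := fun x hx => by
    rw [map_sub]
    exact sub_nonneg.2 (hmin x hx)
  obtain ⟨f, hf⟩ := exists_dual_ker_eq_span_singleton hE hd0
  obtain ⟨p, hp, q, hq, hpq, hside⟩ := exists_ne_mul_nonneg (fun x => f (x - t)) hR
  rcases mem_hull_pair_or_of_ker_eq_span hf hd (hφ p hp) (hφ q hq) hside with h | h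
  · exact ⟨p, hp, q, hq, hpq, h⟩
  · exact ⟨q, hq, p, hp, hpq.symm, h⟩

variable [DecidableEq E]

lemma exists_sub_argminInsert_mem_hull_pair (hE : Module.finrank 𝕜 E = 2) {φ : Module.Dual 𝕜 E}
    {s a : E} {T : Finset E} (hT : 4 ≤ T.card) (hs : ∀ x ∈ insert a T, φ s < φ x) :
    ∃ p ∈ T, ∃ q ∈ T, ∃ r ∈ T, p ≠ q ∧ p ≠ r ∧ q ≠ r ∧
      p - argminInsert φ a {q, r} ∈ PointedCone.hull 𝕜
        {argminInsert φ a {q, r} - s, q - argminInsert φ a {q, r}} := by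
  obtain ⟨t, ht⟩ : ∃ t, t = argminInsert φ a T := ⟨_, rfl⟩
  have htT : t ∈ insert a T := ht ▸ argminInsert_mem φ a T
  have hmin : ∀ x ∈ T.erase t, φ t ≤ φ x := fun x hx =>
    ht ▸ apply_argminInsert_le φ (Finset.mem_insert_of_mem (Finset.mem_of_mem_erase hx))
  have hcard : 3 ≤ (T.erase t).card :=
    (Nat.le_sub_one_of_lt hT).trans Finset.pred_card_le_card_erase
  have hd : 0 < φ (t - s) := by
    rw [map_sub]
    exact sub_pos.2 (hs t htT)
  obtain ⟨p, hp, q, hq, hpq, hcone⟩ := exists_ne_sub_mem_hull_pair hE hcard hd hmin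
  obtain ⟨hpt, hpT⟩ := Finset.mem_erase.1 hp
  obtain ⟨hqt, hqT⟩ := Finset.mem_erase.1 hq
  obtain ⟨r, hrT, hpr, hqr, htr⟩ := exists_third_mem (Nat.lt_of_succ_lt hT) htT hpt hqt
  have hqrT : {q, r} ⊆ T := by simp [Finset.insert_subset_iff, hqT, hrT]
  have ht_eq : argminInsert φ a {q, r} = t :=
    ht ▸ argminInsert_eq_of_subset hqrT (ht ▸ htr)
  exact ⟨p, hpT, q, hqT, r, hrT, hpq, hpr, hqr, ht_eq ▸ hcone⟩

end Cone

section Halfspace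

variable {𝕜 E : Type*} [Field 𝕜] [LinearOrder 𝕜] [AddCommGroup E] [Module 𝕜 E]

/-- `H` is a half-space bounded below along `φ`: an open or closed superlevel set of `φ`, or more
generally the preimage under `φ` of an upper set of scalars. -/
def IsUpperAlong (φ : Module.Dual 𝕜 E) (H : Set E) : Prop :=
  ∀ ⦃x z⦄, φ x ≤ φ z → x ∈ H → z ∈ H

namespace IsUpperAlong

variable {φ ψ : Module.Dual 𝕜 E} {H : Set E} {s t q p a : E}

lemma lt (hH : IsUpperAlong φ H) (hs : s ∉ H) (ht : t ∈ H) : φ s < φ t :=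
  lt_of_not_ge fun hle => hs (hH hle ht)

variable [IsStrictOrderedRing 𝕜]

lemma mem_of_sub_mem_hull_pair (hH : IsUpperAlong φ H) (hs : s ∉ H) (ht : t ∈ H)
    (hq : φ t ≤ φ q) (hp : p - t ∈ PointedCone.hull 𝕜 {t - s, q - t}) : p ∈ H := by
  have hpt : 0 ≤ φ (p - t) := apply_nonneg_of_mem_hull_pair hp
    (by rw [map_sub]; exact sub_nonneg.2 (hH.lt hs ht).le)
    (by rw [map_sub]; exact sub_nonneg.2 hq)
  rw [map_sub, sub_nonneg] at hpt
  exact hH hpt ht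

lemma mem_of_argminInsert_eq [DecidableEq E] {r : E} (hH : IsUpperAlong ψ H) (hs : s ∉ H)
    (hqr : ∀ x ∈ insert a ({q, r} : Finset E), x ∈ H)
    (heq : argminInsert ψ a {q, r} = argminInsert φ a {q, r})
    (hp : p - argminInsert φ a {q, r} ∈ PointedCone.hull 𝕜
      {argminInsert φ a {q, r} - s, q - argminInsert φ a {q, r}}) : p ∈ H := by
  rw [← heq] at hp
  exact hH.mem_of_sub_mem_hull_pair hs (hqr _ (argminInsert_mem ψ a _))
    (apply_argminInsert_le ψ (by simp)) hp

end IsUpperAlong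

end Halfspace

section Certificate

/-- Some `k` of the examples in `S` contain one that `C` is forced to label like `h` by the
remaining examples of `S` and the value of `σ` on the other `k - 1`: the requirement that `CertDim`
puts on each labelled sample. -/
def HasCertifiedExample {X : Type*} [DecidableEq X] (C : Set (X → ℤ))
    (σ : (X → ℤ) → Finset (X × ℤ) → ℕ) (k : ℕ) (h : X → ℤ) (S : Finset (X × ℤ)) : Prop :=
  ∃ U ⊆ S, U.card = k ∧ ∃ p ∈ U, ∀ h' ∈ VSpace C ↑(S.erase p),
    σ h' (U.erase p) = σ h (U.erase p) → h' p.1 = h p.1 ∧ h p.1 = p.2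

variable {𝕜 E : Type*} [Field 𝕜] [LinearOrder 𝕜] [AddCommGroup E] [Module 𝕜 E] [DecidableEq E]

/-- The certificate of a half-space hypothesis with functional `φ`, as a function of the retained
examples: the index of the minimiser of `φ` among them and `sp` if they are positive, and of `-φ`
among them and `sm` otherwise. -/
noncomputable def halfspaceCertificate (sp sm : E) (φ : Module.Dual 𝕜 E) (W : Finset (E × ℤ)) : ℕ :=
  if ∀ p ∈ W, p.2 = 1 then argminIndex φ sp (W.image Prod.fst)
  else argminIndex (-φ) sm (W.image Prod.fst)

lemma halfspaceCertificate_le_card (sp sm : E) (φ : Module.Dual 𝕜 E) (W : Finset (E × ℤ)) :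
    halfspaceCertificate sp sm φ W ≤ W.card := by
  unfold halfspaceCertificate
  split_ifs <;> exact (argminIndex_le_card _ _ _).trans Finset.card_image_le

lemma halfspaceCertificate_pair_one (sp sm : E) (φ : Module.Dual 𝕜 E) (q r : E) :
    halfspaceCertificate sp sm φ {(q, 1), (r, 1)} = argminIndex φ sp {q, r} := by
  simp [halfspaceCertificate]

lemma halfspaceCertificate_pair_neg_one (sp sm : E) (φ : Module.Dual 𝕜 E) (q r : E) :
    halfspaceCertificate sp sm φ {(q, -1), (r, -1)} = argminIndex (-φ) sm {q, r} := by
  simp [halfspaceCertificate]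

variable [IsStrictOrderedRing 𝕜]

lemma hasCertifiedExample_of_isUpperAlong (hE : Module.finrank 𝕜 E = 2) {C : Set (E → ℤ)}
    {s a : E} {y : ℤ} {φ : (E → ℤ) → Module.Dual 𝕜 E} {σ : (E → ℤ) → Finset (E × ℤ) → ℕ}
    (ha : ∀ h ∈ C, h a = y) (hs : ∀ h ∈ C, h s ≠ y)
    (hφ : ∀ h ∈ C, IsUpperAlong (φ h) (h ⁻¹' {y}))
    (hσ : ∀ h q r, σ h {(q, y), (r, y)} = argminIndex (φ h) a {q, r})
    {h : E → ℤ} (hh : h ∈ C) {S : Finset (E × ℤ)} (hS : Consistent h ↑S)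
    {T : Finset E} (hT : 4 ≤ T.card) (hTS : ∀ x ∈ T, (x, y) ∈ S) :
    HasCertifiedExample C σ 3 h S := by
  have hlabel : ∀ x ∈ T, h x = y := fun x hx => hS _ (hTS x hx)
  obtain ⟨p, hpT, q, hqT, r, hrT, hpq, hpr, hqr, hcone⟩ :=
    exists_sub_argminInsert_mem_hull_pair hE hT
      (Finset.forall_mem_insert _ _ _ |>.2 ⟨(hφ h hh).lt (hs h hh) (ha h hh),
        fun x hx => (hφ h hh).lt (hs h hh) (hlabel x hx)⟩)
  have herase : ({(p, y), (q, y), (r, y)} : Finset (E × ℤ)).erase (p, y) = {(q, y), (r, y)} :=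
    Finset.erase_insert (by simp [hpq, hpr])
  refine ⟨{(p, y), (q, y), (r, y)}, ?_, ?_, (p, y), Finset.mem_insert_self _ _, ?_⟩
  · simp [Finset.insert_subset_iff, hTS p hpT, hTS q hqT, hTS r hrT]
  · exact Finset.card_eq_three.2 ⟨_, _, _, by simp [hpq], by simp [hpr], by simp [hqr], rfl⟩
  · intro h' hh' hcert
    rw [herase, hσ, hσ] at hcert
    have hlabel' : ∀ x ∈ T, x ≠ p → h' x = y := fun x hx hxp =>
      hh'.2 (x, y) (by simp [hxp, hTS x hx])
    have hp : h' p = y := (hφ h' hh'.1).mem_of_argminInsert_eq (hs h' hh'.1)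
      (by simp [ha h' hh'.1, hlabel' q hqT hpq.symm, hlabel' r hrT hpr.symm])
      (argminInsert_eq_of_argminIndex_eq hcert) hcone
    exact ⟨hp.trans (hlabel p hpT).symm, hlabel p hpT⟩

end Certificate

lemma exists_label_card_lt {X Y : Type*} {S : Finset (X × Y)} {L : Finset Y} {n : ℕ}
    (hS : ∀ p ∈ S, p.2 ∈ L) (hcard : L.card * n < S.card) :
    ∃ y ∈ L, ∃ T : Finset X, n < T.card ∧ ∀ x ∈ T, (x, y) ∈ S := by
  obtain ⟨y, hy, hlt⟩ := Finset.exists_lt_card_fiber_of_mul_lt_card_of_maps_to hS hcard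
  have hinj : Set.InjOn Prod.fst (S.filter (fun p => p.2 = y) : Set (X × Y)) := by
    intro p hp q hq hpq
    exact Prod.ext hpq ((Finset.mem_filter.1 hp).2.trans (Finset.mem_filter.1 hq).2.symm)
  refine ⟨y, hy, (S.filter (fun p => p.2 = y)).image Prod.fst,
    by rwa [Finset.card_image_of_injOn hinj], ?_⟩
  intro x hx
  obtain ⟨p, hp, rfl⟩ := Finset.mem_image.1 hx
  obtain ⟨hpS, rfl⟩ := Finset.mem_filter.1 hp
  exact hpS

/-- `h` is a `±1`-valued half-space hypothesis on a vector space over an ordered field that labels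
`sp` positively and `sm` negatively.  Asking only that `h` be monotone along some functional covers
open and closed half-spaces alike. -/
structure IsSeparatingHalfspace (𝕜 : Type*) {E : Type*} [Field 𝕜] [LinearOrder 𝕜]
    [AddCommGroup E] [Module 𝕜 E] (sp sm : E) (h : E → ℤ) : Prop where
  eq_one_or_eq_neg_one : ∀ x, h x = 1 ∨ h x = -1
  apply_sp : h sp = 1
  apply_sm : h sm = -1
  exists_mono : ∃ φ : Module.Dual 𝕜 E, ∀ x z, φ x ≤ φ z → h x ≤ h z

theorem stmt12_general {𝕜 E : Type*} [Field 𝕜] [LinearOrder 𝕜] [IsStrictOrderedRing 𝕜]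
    [AddCommGroup E] [Module 𝕜 E] [DecidableEq E] (hE : Module.finrank 𝕜 E = 2)
    {C : Set (E → ℤ)} {sp sm : E} (hC : ∀ h ∈ C, IsSeparatingHalfspace 𝕜 sp sm h)
    {m : ℕ} (hm : 7 ≤ m) : CertDim C 3 m 3 := by
  choose! φ hφ using fun h hh => (hC h hh).exists_mono
  have hpos : ∀ h ∈ C, IsUpperAlong (φ h) (h ⁻¹' {1}) := by
    intro h hh x z hle (hx : h x = 1)
    have := hφ h hh x z hle
    exact ((hC h hh).eq_one_or_eq_neg_one z).resolve_right (by omega)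
  have hneg : ∀ h ∈ C, IsUpperAlong (-φ h) (h ⁻¹' {-1}) := by
    intro h hh x z hle (hx : h x = -1)
    have := hφ h hh z x (neg_le_neg_iff.1 hle)
    exact ((hC h hh).eq_one_or_eq_neg_one z).resolve_left (by omega)
  refine ⟨fun h => halfspaceCertificate sp sm (φ h),
    fun h W hW => (halfspaceCertificate_le_card sp sm (φ h) W).trans_lt (by omega),
    fun h hh S hcard hS => ?_⟩
  have hlabels : ∀ p ∈ S, p.2 ∈ ({1, -1} : Finset ℤ) := by
    intro p hp
    simpa [← hS p hp] using (hC h hh).eq_one_or_eq_neg_one p.1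
  obtain ⟨y, hy, T, hT, hTS⟩ := exists_label_card_lt (n := 3) hlabels (by simp; omega)
  obtain rfl | rfl : y = 1 ∨ y = -1 := by simpa using hy
  · exact hasCertifiedExample_of_isUpperAlong hE (fun h hh => (hC h hh).apply_sp)
      (fun h hh => by rw [(hC h hh).apply_sm]; decide) hpos
      (fun h => halfspaceCertificate_pair_one sp sm (φ h)) hh hS hT hTS
  · exact hasCertifiedExample_of_isUpperAlong hE (fun h hh => (hC h hh).apply_sm)
      (fun h hh => by rw [(hC h hh).apply_sp]; decide) hneg
      (fun h => halfspaceCertificate_pair_neg_one sp sm (φ h)) hh hS hT hTS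

lemma monotone_signR : Monotone signR := by
  intro t u htu
  unfold signR
  split_ifs <;> first | omega | linarith

lemma isSeparatingHalfspace_of_mem_halfspaces {sp sm : Fin 2 → ℝ} {h : (Fin 2 → ℝ) → ℤ}
    (hh : h ∈ Halfspaces sp sm) : IsSeparatingHalfspace ℝ sp sm h := by
  obtain ⟨w, b, hsp, hsm, rfl⟩ := hh
  exact
    { eq_one_or_eq_neg_one := fun x => ite_eq_or_eq _ _ _
      apply_sp := if_pos (sub_nonneg.2 hsp)
      apply_sm := if_neg (sub_neg.2 hsm).not_ge
      exists_mono :=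
        ⟨dotProductBilin ℝ ℝ w, fun x z hle => monotone_signR (sub_le_sub_right hle b)⟩ }

/-- For any distinct `s₊, s₋ ∈ ℝ²`, the class of two-dimensional
`{(s₊,+1),(s₋,−1)}`-halfspaces has certificate dimension `3` with parameters
`(m, n) = (7, 3)`. -/
theorem stmt12 (sp sm : Fin 2 → ℝ) (hne : sp ≠ sm) :
    CertDim (Halfspaces sp sm) 3 7 3 := by
  exact stmt12_general (𝕜 := ℝ) (Module.finrank_fin_fun ℝ)
    (fun _ => isSeparatingHalfspace_of_mem_halfspaces) le_rfl
end
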